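/- arXiv:math/9201305 — 4 statements merged into one kernel-verified Lean document; each statement's English description precedes it below -/
import Mathlib

section
/- The number of domino tilings of the Aztec diamond of order n is 2^(n(n+1)/2). -/
/-- The lattice unit square `[a,a+1] × [b,b+1]` with lower-left corner `c = (a,b)`
lies inside the region `{(x,y) : |x|+|y| ≤ n+1}`, i.e. it is a cell of the
Aztec diamond of order `n`. -/
def AztecCell (n : ℕ) (c : ℤ × ℤ) : Prop :=
  max |c.1| |c.1 + 1| + max |c.2| |c.2 + 1| ≤ (n : ℤ) + 1

/-- A domino, encoded by its lower-left cell together with its orientation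
(`true` = horizontal `2×1`, `false` = vertical `1×2`). -/
abbrev Domino := (ℤ × ℤ) × Bool

/-- The two cells covered by a domino. -/
def dominoCells (d : Domino) : Set (ℤ × ℤ) :=
  if d.2 then {d.1, (d.1.1 + 1, d.1.2)} else {d.1, (d.1.1, d.1.2 + 1)}

/-- `T` is a domino tiling of the Aztec diamond of order `n`: every domino of `T`
lies inside the diamond and every cell of the diamond is covered by exactly one
domino of `T`. -/
def IsTiling (n : ℕ) (T : Set Domino) : Prop :=
  (∀ d ∈ T, ∀ c ∈ dominoCells d, AztecCell n c) ∧
  (∀ c, AztecCell n c → ∃! d, d ∈ T ∧ c ∈ dominoCells d)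

namespace AztecCount

abbrev Pat := Bool × Bool × Bool × Bool

def okPat (p t : Pat) : Bool :=
  (!(t.1 && t.2.2.1)) && (p.1 == (t.1 || t.2.2.1)) &&
  (!(t.1 && t.2.2.2)) && (p.2.1 == (t.1 || t.2.2.2)) &&
  (!(t.2.1 && t.2.2.1)) && (p.2.2.1 == (t.2.1 || t.2.2.1)) &&
  (!(t.2.1 && t.2.2.2)) && (p.2.2.2 == (t.2.1 || t.2.2.2))

def wt (p : Pat) : ℕ := (Finset.univ.filter (fun t : Pat => okPat p t = true)).card

def neg (p : Pat) : Pat := (!p.1, !p.2.1, !p.2.2.1, !p.2.2.2)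

lemma wt_neg (p : Pat) :
    2 * wt p = wt (neg p) * 2 ^ ((if p.1 then 1 else 0) + (if p.2.2.2 then 1 else 0)) := by
  revert p; decide

lemma aztecCell_iff (n : ℕ) (a b : ℤ) : AztecCell n (a, b) ↔
    a + b + 1 ≤ n ∧ a - b ≤ n ∧ b - a ≤ n ∧ - a - b ≤ n + 1 := by
  unfold AztecCell
  have h : ∀ a : ℤ, max |a| |a + 1| = max (a + 1) (-a) := by
    intro a
    rcases le_or_gt 0 a with h | h
    · rw [abs_of_nonneg h, abs_of_nonneg (by omega)]; omega
    · rw [abs_of_neg h, abs_of_nonpos (by omega)]; omega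
  simp only [h]
  omega

noncomputable def ctr (n : ℕ) : Finset (ℤ × ℤ) :=
  ((Finset.Icc (-(n : ℤ)) n) ×ˢ (Finset.Icc (-(n : ℤ)) n)).filter
    (fun v => v.1 + v.2 ≤ n ∧ v.1 - v.2 ≤ n ∧ v.2 - v.1 ≤ n ∧ - v.1 - v.2 ≤ n ∧
      (v.1 + v.2 + n) % 2 = 0)

lemma mem_ctr (n : ℕ) (x y : ℤ) : (x, y) ∈ ctr n ↔
    x + y ≤ n ∧ x - y ≤ n ∧ y - x ≤ n ∧ - x - y ≤ n ∧ (x + y + n) % 2 = 0 := by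
  simp only [ctr, Finset.mem_filter, Finset.mem_product, Finset.mem_Icc]
  omega

noncomputable def cells (n : ℕ) : Finset (ℤ × ℤ) :=
  ((Finset.Icc (-(n : ℤ) - 2) (n + 2)) ×ˢ (Finset.Icc (-(n : ℤ) - 2) (n + 2))).filter
    (fun v => v.1 + v.2 + 1 ≤ n ∧ v.1 - v.2 ≤ n ∧ v.2 - v.1 ≤ n ∧ - v.1 - v.2 ≤ n + 1)

lemma mem_cells (n : ℕ) (a b : ℤ) : (a, b) ∈ cells n ↔
    a + b + 1 ≤ n ∧ a - b ≤ n ∧ b - a ≤ n ∧ - a - b ≤ n + 1 := by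
  simp only [cells, Finset.mem_filter, Finset.mem_product, Finset.mem_Icc]
  omega

def pat (S : Finset (ℤ × ℤ)) (v : ℤ × ℤ) : Pat :=
  (decide ((v.1 - 1, v.2 - 1) ∈ S), decide ((v.1, v.2 - 1) ∉ S),
    decide ((v.1 - 1, v.2) ∈ S), decide ((v.1, v.2) ∉ S))

/-- Boundary condition on arrow configurations. -/
def Bd (n q : ℕ) (S : Finset (ℤ × ℤ)) : Prop :=
  ∀ a b : ℤ, (a, b) ∈ cells (n + 1) →
    ((a + b + n) % 2 = 0 →
      ((a, b) ∉ ctr n → ((a, b) ∈ S ↔ (a, b) ∈ cells q)) ∧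
      ((a + 1, b + 1) ∉ ctr n → ((a, b) ∈ S ↔ (a, b) ∉ cells q))) ∧
    ((a + b + n) % 2 = 1 →
      ((a, b + 1) ∉ ctr n → ((a, b) ∈ S ↔ (a, b) ∈ cells q)) ∧
      ((a + 1, b) ∉ ctr n → ((a, b) ∈ S ↔ (a, b) ∉ cells q)))

open Classical in
noncomputable def bds (n q : ℕ) : Finset (Finset (ℤ × ℤ)) :=
  (cells (n + 1)).powerset.filter (Bd n q)

lemma mem_bds (n q : ℕ) (S) : S ∈ bds n q ↔ S ⊆ cells (n + 1) ∧ Bd n q S := by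
  simp [bds]

lemma bd_aux (n : ℕ) (a b : ℤ) (h : (a, b) ∈ cells (n + 1)) :
    ((a + b + n) % 2 = 0 → ((a, b) ∉ ctr n → (a, b) ∉ cells n) ∧
      ((a + 1, b + 1) ∉ ctr n → (a, b) ∉ cells n)) ∧
    ((a + b + n) % 2 = 1 → ((a, b + 1) ∉ ctr n → (a, b) ∉ cells n) ∧
      ((a + 1, b) ∉ ctr n → (a, b) ∉ cells n)) := by
  simp only [mem_cells, mem_ctr] at *
  push_cast at h
  refine ⟨fun h0 => ⟨?_, ?_⟩, fun h0 => ⟨?_, ?_⟩⟩ <;> intro h1 h2 <;> apply h1 <;> omega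

lemma bd_flip (n : ℕ) (S : Finset (ℤ × ℤ)) :
    (Bd n n S → Bd n (n + 1) (cells (n + 1) \ S)) ∧
    (Bd n (n + 1) S → Bd n n (cells (n + 1) \ S)) := by
  constructor <;>
  · intro hS a b hab
    have h := hS a b hab
    have h' := bd_aux n a b hab
    simp only [Finset.mem_sdiff, hab, true_and]
    clear hS
    refine ⟨fun h0 => ⟨fun h1 => ?_, fun h1 => ?_⟩, fun h0 => ⟨fun h1 => ?_, fun h1 => ?_⟩⟩
    · have t1 := (h.1 h0).1 h1
      have t2 := (h'.1 h0).1 h1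
      clear h h'
      simp only [hab, t2, iff_true, iff_false, not_true, not_false_iff, not_not] at t1 ⊢
      exact t1
    · have t1 := (h.1 h0).2 h1
      have t2 := (h'.1 h0).2 h1
      clear h h'
      simp only [hab, t2, iff_true, iff_false, not_true, not_false_iff, not_not] at t1 ⊢
      exact t1
    · have t1 := (h.2 h0).1 h1
      have t2 := (h'.2 h0).1 h1
      clear h h'
      simp only [hab, t2, iff_true, iff_false, not_true, not_false_iff, not_not] at t1 ⊢
      exact t1
    · have t1 := (h.2 h0).2 h1
      have t2 := (h'.2 h0).2 h1
      clear h h'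
      simp only [hab, t2, iff_true, iff_false, not_true, not_false_iff, not_not] at t1 ⊢
      exact t1

lemma sum_flip (n : ℕ) (f : Finset (ℤ × ℤ) → ℕ) :
    ∑ S ∈ bds n n, f S = ∑ S ∈ bds n (n + 1), f (cells (n + 1) \ S) := by
  refine Finset.sum_nbij' (fun S => cells (n + 1) \ S) (fun S => cells (n + 1) \ S) ?_ ?_ ?_ ?_ ?_
  · intro S hS
    rw [mem_bds] at hS ⊢
    exact ⟨Finset.sdiff_subset, (bd_flip n S).1 hS.2⟩
  · intro S hS
    rw [mem_bds] at hS ⊢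
    exact ⟨Finset.sdiff_subset, (bd_flip n S).2 hS.2⟩
  · intro S hS
    rw [mem_bds] at hS
    simp [Finset.inter_eq_right.2 hS.1]
  · intro S hS
    rw [mem_bds] at hS
    simp [Finset.inter_eq_right.2 hS.1]
  · intro S hS
    rw [mem_bds] at hS
    simp [Finset.inter_eq_right.2 hS.1]

lemma pat_flip (n : ℕ) (S : Finset (ℤ × ℤ)) (v : ℤ × ℤ) (hv : v ∈ ctr n) :
    pat (cells (n + 1) \ S) v = neg (pat S v) := by
  obtain ⟨x, y⟩ := v
  rw [mem_ctr] at hv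
  have h1 : (x - 1, y - 1) ∈ cells (n + 1) := by rw [mem_cells]; push_cast; omega
  have h2 : (x, y - 1) ∈ cells (n + 1) := by rw [mem_cells]; push_cast; omega
  have h3 : (x - 1, y) ∈ cells (n + 1) := by rw [mem_cells]; push_cast; omega
  have h4 : (x, y) ∈ cells (n + 1) := by rw [mem_cells]; push_cast; omega
  simp [pat, neg, Finset.mem_sdiff, h1, h2, h3, h4]

noncomputable def ev (n : ℕ) : Finset (ℤ × ℤ) := (cells (n + 1)).filter (fun c => (c.1 + c.2 + n) % 2 = 0)

lemma card_ev (n : ℕ) : (ev n).card = (ctr n).card + (n + 1) := by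
  have h : ev n = ctr n ∪
      (Finset.range (n + 1)).image (fun i : ℕ => (((i : ℤ) - n - 1, -(i : ℤ) - 1) : ℤ × ℤ)) := by
    ext ⟨a, b⟩
    simp only [ev, Finset.mem_filter, Finset.mem_union, mem_cells, mem_ctr, Finset.mem_image,
      Finset.mem_range, Prod.mk.injEq]
    push_cast
    constructor
    · intro h
      by_cases h2 : -a - b ≤ n
      · left; omega
      · right; exact ⟨(a + n + 1).toNat, by omega, by omega, by omega⟩
    · rintro (h | ⟨i, h1, h2, h3⟩)
      · omega
      · omega
  rw [h, Finset.card_union_of_disjoint, Finset.card_image_of_injective, Finset.card_range]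
  · intro i j hij
    simp only [Prod.mk.injEq] at hij
    omega
  · rw [Finset.disjoint_left]
    rintro ⟨a, b⟩ h1 h2
    simp only [mem_ctr, Finset.mem_image, Finset.mem_range, Prod.mk.injEq] at h1 h2
    obtain ⟨i, h2, h3, h4⟩ := h2
    omega

lemma sum_in (n : ℕ) (S : Finset (ℤ × ℤ)) (hS : S ∈ bds n (n + 1)) :
    ∑ v ∈ ctr n, ((if (pat S v).1 then 1 else 0) + (if (pat S v).2.2.2 then 1 else 0))
      = (ctr n).card + (n + 1) := by
  rw [mem_bds] at hS
  obtain ⟨hS1, hS2⟩ := hS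
  rw [Finset.sum_add_distrib, ← Finset.card_filter, ← Finset.card_filter, ← card_ev]
  rw [← Finset.card_filter_add_card_filter_not (s := ev n) (fun c => c ∈ S)]
  congr 1
  · refine Finset.card_nbij' (fun v => (v.1 - 1, v.2 - 1)) (fun v => (v.1 + 1, v.2 + 1)) ?_ ?_ ?_ ?_
    · rintro ⟨x, y⟩ h
      simp only [Finset.coe_filter, Set.mem_ofPred_eq, ev, Finset.mem_filter, pat, mem_ctr, mem_cells, decide_eq_true_eq] at h ⊢
      refine ⟨⟨?_, ?_⟩, h.2⟩ <;> push_cast <;> omega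
    · rintro ⟨x, y⟩ h
      simp only [Finset.coe_filter, Set.mem_ofPred_eq, ev, Finset.mem_filter, pat, decide_eq_true_eq] at h ⊢
      have h2 := ((hS2 x y h.1.1).1 h.1.2).2
      refine ⟨?_, by simpa using h.2⟩
      by_contra h3
      exact ((h2 h3).1 h.2) h.1.1
    · rintro ⟨x, y⟩ h; simp
    · rintro ⟨x, y⟩ h; simp
  · congr 1
    ext ⟨x, y⟩
    simp only [ev, Finset.mem_filter, pat, decide_eq_true_eq]
    constructor
    · intro h
      refine ⟨?_, h.2⟩
      rw [mem_ctr] at h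
      rw [mem_cells]
      push_cast
      omega
    · intro h
      refine ⟨?_, h.2⟩
      have h2 := ((hS2 x y h.1.1).1 h.1.2).1
      by_contra h3
      exact h.2 ((h2 h3).2 h.1.1)

lemma prod_flip (n : ℕ) (S : Finset (ℤ × ℤ)) (hS : S ∈ bds n (n + 1)) :
    ∏ v ∈ ctr n, wt (pat S v) = 2 ^ (n + 1) * ∏ v ∈ ctr n, wt (pat (cells (n + 1) \ S) v) := by
  have h : ∏ v ∈ ctr n, (2 * wt (pat S v)) =
      ∏ v ∈ ctr n, (wt (pat (cells (n + 1) \ S) v) *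
        2 ^ ((if (pat S v).1 then 1 else 0) + (if (pat S v).2.2.2 then 1 else 0))) := by
    refine Finset.prod_congr rfl fun v hv => ?_
    rw [pat_flip n S v hv, wt_neg]
  rw [Finset.prod_mul_distrib, Finset.prod_mul_distrib, Finset.prod_const,
    Finset.prod_pow_eq_pow_sum, sum_in n S hS, pow_add] at h
  have h2 : 0 < 2 ^ (ctr n).card := by positivity
  refine Nat.eq_of_mul_eq_mul_left h2 ?_
  rw [h]; ring

/-- sum of weights -/
noncomputable def Z (n q : ℕ) : ℕ := ∑ S ∈ bds n q, ∏ v ∈ ctr n, wt (pat S v)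

lemma Z_rec (n : ℕ) : Z n (n + 1) = 2 ^ (n + 1) * Z n n := by
  unfold Z
  rw [sum_flip, Finset.mul_sum]
  exact Finset.sum_congr rfl fun S hS => prod_flip n S hS

/-- Exactly one of four. -/
def One (p q r s : Prop) : Prop :=
  (p ∨ q ∨ r ∨ s) ∧ ¬(p ∧ q) ∧ ¬(p ∧ r) ∧ ¬(p ∧ s) ∧ ¬(q ∧ r) ∧ ¬(q ∧ s) ∧ ¬(r ∧ s)

lemma one_even {p q r s X : Prop} (h1 : ¬(p ∧ r) ∧ (X ↔ p ∨ r)) (h2 : ¬(q ∧ s) ∧ (¬X ↔ q ∨ s)) :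
    One p q r s := by
  unfold One
  by_cases X <;> by_cases p <;> by_cases q <;> by_cases r <;> by_cases s <;> simp_all

lemma one_odd {p q r s X : Prop} (h1 : ¬(p ∧ s) ∧ (X ↔ p ∨ s)) (h2 : ¬(q ∧ r) ∧ (¬X ↔ q ∨ r)) :
    One p q r s := by
  unfold One
  by_cases X <;> by_cases p <;> by_cases q <;> by_cases r <;> by_cases s <;> simp_all

lemma loc_even {p q r s Q N : Prop} (h1 : Q → One p q r s)
    (h2 : ¬Q → ¬p ∧ ¬q ∧ ¬r ∧ ¬s) (h3 : ¬Q → N) :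
    ¬(q ∧ s) ∧ (¬(p ∨ r ∨ (N ∧ ¬Q)) ↔ q ∨ s) := by
  unfold One at h1
  by_cases Q <;> by_cases p <;> by_cases q <;> by_cases r <;> by_cases s <;> simp_all

lemma loc_odd {p q r s Q N : Prop} (h1 : Q → One p q r s)
    (h2 : ¬Q → ¬p ∧ ¬q ∧ ¬r ∧ ¬s) (h3 : ¬Q → N) :
    ¬(q ∧ r) ∧ (¬(p ∨ s ∨ (N ∧ ¬Q)) ↔ q ∨ r) := by
  unfold One at h1
  by_cases Q <;> by_cases p <;> by_cases q <;> by_cases r <;> by_cases s <;> simp_all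

lemma loc_even' {p q r s Q N : Prop} (h1 : Q → One p q r s)
    (h2 : ¬Q → ¬p ∧ ¬q ∧ ¬r ∧ ¬s) (h3 : ¬N) :
    ¬(p ∧ r) ∧ ((p ∨ r ∨ (N ∧ ¬Q)) ↔ p ∨ r) := by
  unfold One at h1
  by_cases Q <;> by_cases p <;> by_cases q <;> by_cases r <;> by_cases s <;> simp_all

lemma loc_odd' {p q r s Q N : Prop} (h1 : Q → One p q r s)
    (h2 : ¬Q → ¬p ∧ ¬q ∧ ¬r ∧ ¬s) (h3 : ¬N) :
    ¬(p ∧ s) ∧ ((p ∨ s ∨ (N ∧ ¬Q)) ↔ p ∨ s) := by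
  unfold One at h1
  by_cases Q <;> by_cases p <;> by_cases q <;> by_cases r <;> by_cases s <;> simp_all

lemma mem_dc (a b x y : ℤ) (o : Bool) : (a, b) ∈ dominoCells ((x, y), o) ↔
    (o = true ∧ ((x = a ∧ y = b) ∨ (x = a - 1 ∧ y = b))) ∨
    (o = false ∧ ((x = a ∧ y = b) ∨ (x = a ∧ y = b - 1))) := by
  cases o <;> simp [dominoCells] <;> omega

lemma cover_iff (T : Set Domino) (a b : ℤ) :
    (∃! d, d ∈ T ∧ (a, b) ∈ dominoCells d) ↔
    One (((a, b), true) ∈ T) (((a - 1, b), true) ∈ T) (((a, b), false) ∈ T)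
      (((a, b - 1), false) ∈ T) := by
  constructor
  · rintro ⟨⟨⟨x, y⟩, o⟩, ⟨h1, h2⟩, h3⟩
    have k1 := fun h => h3 ((a, b), true) ⟨h, by simp [mem_dc]⟩
    have k2 := fun h => h3 ((a - 1, b), true) ⟨h, by simp [mem_dc]⟩
    have k3 := fun h => h3 ((a, b), false) ⟨h, by simp [mem_dc]⟩
    have k4 := fun h => h3 ((a, b - 1), false) ⟨h, by simp [mem_dc]⟩
    simp only [Prod.mk.injEq] at k1 k2 k3 k4
    rw [mem_dc] at h2
    have e : ((x, y), o) = ((a, b), true) ∨ ((x, y), o) = ((a - 1, b), true) ∨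
      ((x, y), o) = ((a, b), false) ∨ ((x, y), o) = ((a, b - 1), false) := by
      rcases h2 with ⟨rfl, ⟨rfl, rfl⟩ | ⟨rfl, rfl⟩⟩ | ⟨rfl, ⟨rfl, rfl⟩ | ⟨rfl, rfl⟩⟩ <;> simp
    clear h2 h3
    refine ⟨?_, ?_, ?_, ?_, ?_, ?_, ?_⟩
    · rcases e with e | e | e | e <;> rw [e] at h1 <;> simp only [h1, true_or, or_true]
    all_goals
      rintro ⟨u1, u2⟩
      first
        | (have t1 := k1 u1; have t2 := k2 u2; omega)
        | (have t1 := (k1 u1).2; have t2 := (k3 u2).2; rw [← t1] at t2; cases t2; done)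
        | (have t1 := (k1 u1).2; have t2 := (k4 u2).2; rw [← t1] at t2; cases t2; done)
        | (have t1 := (k2 u1).2; have t2 := (k3 u2).2; rw [← t1] at t2; cases t2; done)
        | (have t1 := (k2 u1).2; have t2 := (k4 u2).2; rw [← t1] at t2; cases t2; done)
        | (have t1 := k3 u1; have t2 := k4 u2; omega)
  · rintro ⟨h, n1, n2, n3, n4, n5, n6⟩
    rcases h with h | h | h | h
    all_goals
      refine ⟨_, ⟨h, by simp [mem_dc]⟩, ?_⟩
      rintro ⟨⟨x, y⟩, o⟩ ⟨h1, h2⟩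
      rw [mem_dc] at h2
      rcases h2 with ⟨rfl, ⟨rfl, rfl⟩ | ⟨rfl, rfl⟩⟩ | ⟨rfl, ⟨rfl, rfl⟩ | ⟨rfl, rfl⟩⟩ <;>
        first
          | rfl
          | (exfalso; simp only [h, h1, not_true_eq_false, and_self] at n1 n2 n3 n4 n5 n6; done)

lemma isTiling_iff (n : ℕ) (T : Set Domino) : IsTiling n T ↔
    (∀ a b, ((a, b), true) ∈ T → (a, b) ∈ cells n ∧ (a + 1, b) ∈ cells n) ∧
    (∀ a b, ((a, b), false) ∈ T → (a, b) ∈ cells n ∧ (a, b + 1) ∈ cells n) ∧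
    (∀ a b, (a, b) ∈ cells n → One (((a, b), true) ∈ T) (((a - 1, b), true) ∈ T)
      (((a, b), false) ∈ T) (((a, b - 1), false) ∈ T)) := by
  have hc : ∀ c, AztecCell n c ↔ c ∈ cells n := by
    rintro ⟨a, b⟩; rw [aztecCell_iff, mem_cells]
  unfold IsTiling
  simp only [hc]
  constructor
  · rintro ⟨h1, h2⟩
    refine ⟨fun a b h => ?_, fun a b h => ?_, fun a b h => (cover_iff T a b).1 (h2 _ h)⟩
    · exact ⟨h1 _ h _ (by simp [mem_dc]), h1 _ h _ (by simp [mem_dc])⟩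
    · exact ⟨h1 _ h _ (by simp [mem_dc]), h1 _ h _ (by simp [mem_dc])⟩
  · rintro ⟨h1, h2, h3⟩
    refine ⟨?_, fun c h => (cover_iff T c.1 c.2).2 (h3 _ _ h)⟩
    rintro ⟨⟨x, y⟩, o⟩ h c hc
    cases o
    · have := h2 _ _ h
      simp [dominoCells] at hc
      rcases hc with rfl | rfl <;> tauto
    · have := h1 _ _ h
      simp [dominoCells] at hc
      rcases hc with rfl | rfl <;> tauto


section count
variable {n : ℕ}

def eB (τ : ctr n → Pat) (x y : ℤ) : Prop := ∃ h : (x, y) ∈ ctr n, (τ ⟨(x, y), h⟩).1 = true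
def eT (τ : ctr n → Pat) (x y : ℤ) : Prop := ∃ h : (x, y) ∈ ctr n, (τ ⟨(x, y), h⟩).2.1 = true
def eL (τ : ctr n → Pat) (x y : ℤ) : Prop := ∃ h : (x, y) ∈ ctr n, (τ ⟨(x, y), h⟩).2.2.1 = true
def eR (τ : ctr n → Pat) (x y : ℤ) : Prop := ∃ h : (x, y) ∈ ctr n, (τ ⟨(x, y), h⟩).2.2.2 = true

/-- The local condition at the centre `(x,y)`. -/
def Loc (S : Finset (ℤ × ℤ)) (B T L R : Prop) (x y : ℤ) : Prop :=
  ((¬ (B ∧ L)) ∧ ((x - 1, y - 1) ∈ S ↔ (B ∨ L))) ∧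
  ((¬ (B ∧ R)) ∧ ((x, y - 1) ∉ S ↔ (B ∨ R))) ∧
  ((¬ (T ∧ L)) ∧ ((x - 1, y) ∈ S ↔ (T ∨ L))) ∧
  ((¬ (T ∧ R)) ∧ ((x, y) ∉ S ↔ (T ∨ R)))

lemma ok_iff (S : Finset (ℤ × ℤ)) (x y : ℤ) (b t l r : Bool) :
    okPat (pat S (x, y)) (b, t, l, r) = true ↔ Loc S (b = true) (t = true) (l = true) (r = true) x y := by
  unfold okPat pat Loc
  cases b <;> cases t <;> cases l <;> cases r <;> simp <;> tauto

def toT (τ : ctr n → Pat) : Set Domino := fun d =>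
  if d.2 = true then
    ((d.1.1 + d.1.2 + n) % 2 = 0 ∧ eB τ (d.1.1 + 1) (d.1.2 + 1)) ∨
    ((d.1.1 + d.1.2 + n) % 2 = 1 ∧ eT τ (d.1.1 + 1) d.1.2)
  else
    ((d.1.1 + d.1.2 + n) % 2 = 0 ∧ eL τ (d.1.1 + 1) (d.1.2 + 1)) ∨
    ((d.1.1 + d.1.2 + n) % 2 = 1 ∧ eR τ d.1.1 (d.1.2 + 1))

lemma toT_true (τ : ctr n → Pat) (a b : ℤ) : ((a, b), true) ∈ toT τ ↔
    ((a + b + n) % 2 = 0 ∧ eB τ (a + 1) (b + 1)) ∨ ((a + b + n) % 2 = 1 ∧ eT τ (a + 1) b) :=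
  Iff.rfl

lemma toT_false (τ : ctr n → Pat) (a b : ℤ) : ((a, b), false) ∈ toT τ ↔
    ((a + b + n) % 2 = 0 ∧ eL τ (a + 1) (b + 1)) ∨ ((a + b + n) % 2 = 1 ∧ eR τ a (b + 1)) :=
  Iff.rfl

lemma toT_true0 (τ : ctr n → Pat) (a b : ℤ) (h : (a + b + n) % 2 = 0) :
    ((a, b), true) ∈ toT τ ↔ eB τ (a + 1) (b + 1) := by
  rw [toT_true]; simp [h]

lemma toT_true1 (τ : ctr n → Pat) (a b : ℤ) (h : (a + b + n) % 2 = 1) :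
    ((a, b), true) ∈ toT τ ↔ eT τ (a + 1) b := by
  rw [toT_true]; simp [h]

lemma toT_false0 (τ : ctr n → Pat) (a b : ℤ) (h : (a + b + n) % 2 = 0) :
    ((a, b), false) ∈ toT τ ↔ eL τ (a + 1) (b + 1) := by
  rw [toT_false]; simp [h]

lemma toT_false1 (τ : ctr n → Pat) (a b : ℤ) (h : (a + b + n) % 2 = 1) :
    ((a, b), false) ∈ toT τ ↔ eR τ a (b + 1) := by
  rw [toT_false]; simp [h]

lemma loc_of_ok (S : Finset (ℤ × ℤ)) (τ : ctr n → Pat)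
    (h : ∀ v : ctr n, okPat (pat S v) (τ v) = true) (x y : ℤ) (hv : (x, y) ∈ ctr n) :
    Loc S (eB τ x y) (eT τ x y) (eL τ x y) (eR τ x y) x y := by
  have h1 := h ⟨(x, y), hv⟩
  have := (ok_iff S x y (τ ⟨(x, y), hv⟩).1 (τ ⟨(x, y), hv⟩).2.1 (τ ⟨(x, y), hv⟩).2.2.1
    (τ ⟨(x, y), hv⟩).2.2.2).1 h1
  simpa [eB, eT, eL, eR, hv] using this

lemma not_ctr (τ : ctr n → Pat) (x y : ℤ) (hv : (x, y) ∉ ctr n) :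
    ¬ eB τ x y ∧ ¬ eT τ x y ∧ ¬ eL τ x y ∧ ¬ eR τ x y := by
  simp [eB, eT, eL, eR, hv]

set_option maxHeartbeats 1000000 in
lemma tiling_of_pair {q : ℕ} (hq1 : n ≤ q) (hq2 : q ≤ n + 1) (S : Finset (ℤ × ℤ))
    (τ : ctr n → Pat) (hB : Bd n q S)
    (h : ∀ v : ctr n, okPat (pat S v) (τ v) = true) : IsTiling q (toT τ) := by
  have hl := loc_of_ok S τ h
  -- membership lemmas
  have L1 : ∀ a b : ℤ, (a + b + n) % 2 = 0 → (a + 1, b + 1) ∈ ctr n → (a, b) ∈ S →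
      (a, b) ∈ cells q := by
    intro a b h0 h1 h2
    by_cases h3 : (a, b) ∈ ctr n
    · rw [mem_ctr] at h1 h3; rw [mem_cells]; omega
    · refine (((hB a b ?_).1 h0).1 h3).1 h2
      rw [mem_ctr] at h1; rw [mem_cells]; push_cast; omega
  have L2 : ∀ a b : ℤ, (a + b + n) % 2 = 0 → (a, b) ∈ ctr n → (a, b) ∉ S →
      (a, b) ∈ cells q := by
    intro a b h0 h1 h2
    by_cases h3 : (a + 1, b + 1) ∈ ctr n
    · rw [mem_ctr] at h1 h3; rw [mem_cells]; omega
    · by_contra h4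
      refine h2 ((((hB a b ?_).1 h0).2 h3).2 h4)
      rw [mem_ctr] at h1; rw [mem_cells]; push_cast; omega
  have L3 : ∀ a b : ℤ, (a + b + n) % 2 = 1 → (a + 1, b) ∈ ctr n → (a, b) ∈ S →
      (a, b) ∈ cells q := by
    intro a b h0 h1 h2
    by_cases h3 : (a, b + 1) ∈ ctr n
    · rw [mem_ctr] at h1 h3; rw [mem_cells]; omega
    · refine (((hB a b ?_).2 h0).1 h3).1 h2
      rw [mem_ctr] at h1; rw [mem_cells]; push_cast; omega
  have L4 : ∀ a b : ℤ, (a + b + n) % 2 = 1 → (a, b + 1) ∈ ctr n → (a, b) ∉ S →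
      (a, b) ∈ cells q := by
    intro a b h0 h1 h2
    by_cases h3 : (a + 1, b) ∈ ctr n
    · rw [mem_ctr] at h1 h3; rw [mem_cells]; omega
    · by_contra h4
      refine h2 ((((hB a b ?_).2 h0).2 h3).2 h4)
      rw [mem_ctr] at h1; rw [mem_cells]; push_cast; omega
  rw [isTiling_iff]
  refine ⟨?_, ?_, ?_⟩
  · intro a b hd
    rcases (toT_true τ a b).1 hd with ⟨h0, h1⟩ | ⟨h0, h1⟩
    · have hc : (a + 1, b + 1) ∈ ctr n := h1.1
      obtain ⟨l1, l2, l3, l4⟩ := hl _ _ hc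
      simp only [add_sub_cancel_right] at l1 l2 l3 l4
      exact ⟨L1 a b h0 hc (l1.2.2 (Or.inl h1)),
        L4 (a + 1) b (by omega) hc (l2.2.2 (Or.inl h1))⟩
    · have hc : (a + 1, b) ∈ ctr n := h1.1
      obtain ⟨l1, l2, l3, l4⟩ := hl _ _ hc
      simp only [add_sub_cancel_right] at l1 l2 l3 l4
      exact ⟨L3 a b h0 hc (l3.2.2 (Or.inl h1)),
        L2 (a + 1) b (by omega) hc (l4.2.2 (Or.inl h1))⟩
  · intro a b hd
    rcases (toT_false τ a b).1 hd with ⟨h0, h1⟩ | ⟨h0, h1⟩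
    · have hc : (a + 1, b + 1) ∈ ctr n := h1.1
      obtain ⟨l1, l2, l3, l4⟩ := hl _ _ hc
      simp only [add_sub_cancel_right] at l1 l2 l3 l4
      exact ⟨L1 a b h0 hc (l1.2.2 (Or.inr h1)),
        L3 a (b + 1) (by omega) hc (l3.2.2 (Or.inr h1))⟩
    · have hc : (a, b + 1) ∈ ctr n := h1.1
      obtain ⟨l1, l2, l3, l4⟩ := hl _ _ hc
      simp only [add_sub_cancel_right] at l1 l2 l3 l4
      exact ⟨L4 a b h0 hc (l2.2.2 (Or.inr h1)),
        L2 a (b + 1) (by omega) hc (l4.2.2 (Or.inr h1))⟩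
  · intro a b hc
    have hc' : (a, b) ∈ cells (n + 1) := by rw [mem_cells] at *; push_cast; omega
    rcases Int.emod_two_eq_zero_or_one (a + b + n) with h0 | h0
    · rw [toT_true0 τ a b h0, toT_true1 τ (a - 1) b (by omega), toT_false0 τ a b h0,
        toT_false1 τ a (b - 1) (by omega)]
      simp only [sub_add_cancel]
      have hb := (hB a b hc').1 h0
      by_cases h1 : (a, b) ∈ ctr n
      · have k1 := (hl _ _ h1).2.2.2
        by_cases h2 : (a + 1, b + 1) ∈ ctr n
        · have k2 := (hl _ _ h2).1
          simp only [add_sub_cancel_right] at k2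
          exact one_even k2 k1
        · have k2 := not_ctr τ _ _ h2
          have k3 := hb.2 h2
          refine one_even ?_ k1
          simp [k2, k3, hc]
      · have h2 : (a + 1, b + 1) ∈ ctr n := by
          rw [mem_ctr] at h1 ⊢; rw [mem_cells] at hc'; push_cast at hc'; clear hl L1 L2 L3 L4 hb; omega
        have k1 := not_ctr τ _ _ h1
        have k3 := hb.1 h1
        have k2 := (hl _ _ h2).1
        simp only [add_sub_cancel_right] at k2
        refine one_even k2 ?_
        simp [k1, k3, hc]
    · rw [toT_true1 τ a b h0, toT_true0 τ (a - 1) b (by omega), toT_false1 τ a b h0,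
        toT_false0 τ a (b - 1) (by omega)]
      simp only [sub_add_cancel]
      have hb := (hB a b hc').2 h0
      by_cases h1 : (a, b + 1) ∈ ctr n
      · have k1 := (hl _ _ h1).2.1
        simp only [add_sub_cancel_right] at k1
        by_cases h2 : (a + 1, b) ∈ ctr n
        · have k2 := (hl _ _ h2).2.2.1
          simp only [add_sub_cancel_right] at k2
          exact one_odd k2 k1
        · have k2 := not_ctr τ _ _ h2
          have k3 := hb.2 h2
          refine one_odd ?_ k1
          simp [k2, k3, hc]
      · have h2 : (a + 1, b) ∈ ctr n := by
          rw [mem_ctr] at h1 ⊢; rw [mem_cells] at hc'; push_cast at hc'; clear hl L1 L2 L3 L4 hb; omega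
        have k1 := not_ctr τ _ _ h1
        have k3 := hb.1 h1
        have k2 := (hl _ _ h2).2.2.1
        simp only [add_sub_cancel_right] at k2
        refine one_odd k2 ?_
        simp [k1, k3, hc]

lemma toT_inj (τ τ' : ctr n → Pat) (h : toT τ = toT τ') : τ = τ' := by
  funext ⟨⟨x, y⟩, hv⟩
  have hv' := hv
  rw [mem_ctr] at hv'
  have h1 : ((x - 1, y - 1), true) ∈ toT τ ↔ ((x - 1, y - 1), true) ∈ toT τ' := by rw [h]
  have h2 : ((x - 1, y), true) ∈ toT τ ↔ ((x - 1, y), true) ∈ toT τ' := by rw [h]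
  have h3 : ((x - 1, y - 1), false) ∈ toT τ ↔ ((x - 1, y - 1), false) ∈ toT τ' := by rw [h]
  have h4 : ((x, y - 1), false) ∈ toT τ ↔ ((x, y - 1), false) ∈ toT τ' := by rw [h]
  rw [toT_true0 _ _ _ (by omega), toT_true0 _ _ _ (by omega)] at h1
  rw [toT_true1 _ _ _ (by omega), toT_true1 _ _ _ (by omega)] at h2
  rw [toT_false0 _ _ _ (by omega), toT_false0 _ _ _ (by omega)] at h3
  rw [toT_false1 _ _ _ (by omega), toT_false1 _ _ _ (by omega)] at h4
  simp only [sub_add_cancel, eB, eT, eL, eR, hv, exists_true_left] at h1 h2 h3 h4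
  refine Prod.ext (Bool.eq_iff_iff.2 h1) (Prod.ext (Bool.eq_iff_iff.2 h2)
    (Prod.ext (Bool.eq_iff_iff.2 h3) (Bool.eq_iff_iff.2 h4)))

lemma S_unique {q : ℕ} (S S' : Finset (ℤ × ℤ)) (τ : ctr n → Pat)
    (hS : S ∈ bds n q) (hS' : S' ∈ bds n q)
    (h : ∀ v : ctr n, okPat (pat S v) (τ v) = true)
    (h' : ∀ v : ctr n, okPat (pat S' v) (τ v) = true) : S = S' := by
  rw [mem_bds] at hS hS'
  have hl := loc_of_ok S τ h
  have hl' := loc_of_ok S' τ h'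
  ext ⟨a, b⟩
  by_cases hc : (a, b) ∈ cells (n + 1)
  · have b1 := hS.2 a b hc
    have b2 := hS'.2 a b hc
    rcases Int.emod_two_eq_zero_or_one (a + b + n) with h0 | h0
    · by_cases h2 : (a + 1, b + 1) ∈ ctr n
      · have k := (hl _ _ h2).1.2
        have k' := (hl' _ _ h2).1.2
        simp only [add_sub_cancel_right] at k k'
        rw [k, k']
      · rw [(b1.1 h0).2 h2, (b2.1 h0).2 h2]
    · by_cases h2 : (a + 1, b) ∈ ctr n
      · have k := (hl _ _ h2).2.2.1.2
        have k' := (hl' _ _ h2).2.2.1.2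
        simp only [add_sub_cancel_right] at k k'
        rw [k, k']
      · rw [(b1.2 h0).2 h2, (b2.2 h0).2 h2]
  · exact ⟨fun k => absurd (hS.1 k) hc, fun k => absurd (hS'.1 k) hc⟩

open Classical in
noncomputable def toτ (n : ℕ) (T : Set Domino) (v : ctr n) : Pat :=
  (decide (((v.1.1 - 1, v.1.2 - 1), true) ∈ T), decide (((v.1.1 - 1, v.1.2), true) ∈ T),
   decide (((v.1.1 - 1, v.1.2 - 1), false) ∈ T), decide (((v.1.1, v.1.2 - 1), false) ∈ T))

open Classical in
noncomputable def toS (n q : ℕ) (T : Set Domino) : Finset (ℤ × ℤ) :=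
  (cells (n + 1)).filter (fun c =>
    (c, true) ∈ T ∨
    ((c.1 + c.2 + n) % 2 = 0 ∧ ((c, false) ∈ T ∨ ((c.1 + 1, c.2 + 1) ∉ ctr n ∧ c ∉ cells q))) ∨
    ((c.1 + c.2 + n) % 2 = 1 ∧ (((c.1, c.2 - 1), false) ∈ T ∨
      ((c.1 + 1, c.2) ∉ ctr n ∧ c ∉ cells q))))

lemma mem_toS (n q : ℕ) (T : Set Domino) (a b : ℤ) : (a, b) ∈ toS n q T ↔
    (a, b) ∈ cells (n + 1) ∧ (((a, b), true) ∈ T ∨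
    ((a + b + n) % 2 = 0 ∧ (((a, b), false) ∈ T ∨ ((a + 1, b + 1) ∉ ctr n ∧ (a, b) ∉ cells q))) ∨
    ((a + b + n) % 2 = 1 ∧ (((a, b - 1), false) ∈ T ∨
      ((a + 1, b) ∉ ctr n ∧ (a, b) ∉ cells q)))) := by
  simp [toS]

lemma mem_toS0 (n q : ℕ) (T : Set Domino) (a b : ℤ) (h : (a + b + n) % 2 = 0)
    (hc : (a, b) ∈ cells (n + 1)) : (a, b) ∈ toS n q T ↔
    (((a, b), true) ∈ T ∨ ((a, b), false) ∈ T ∨ ((a + 1, b + 1) ∉ ctr n ∧ (a, b) ∉ cells q)) := by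
  simp [mem_toS, h, hc]

lemma mem_toS1 (n q : ℕ) (T : Set Domino) (a b : ℤ) (h : (a + b + n) % 2 = 1)
    (hc : (a, b) ∈ cells (n + 1)) : (a, b) ∈ toS n q T ↔
    (((a, b), true) ∈ T ∨ ((a, b - 1), false) ∈ T ∨ ((a + 1, b) ∉ ctr n ∧ (a, b) ∉ cells q)) := by
  simp [mem_toS, h, hc]

/-- The centre of the block of a domino of a tiling is a centre. -/
lemma dom_ctr {q : ℕ} (hq2 : q ≤ n + 1) (T : Set Domino) (hT : IsTiling q T) (a b : ℤ) :
    (((a, b), true) ∈ T → ((a + b + n) % 2 = 0 → (a + 1, b + 1) ∈ ctr n) ∧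
      ((a + b + n) % 2 = 1 → (a + 1, b) ∈ ctr n)) ∧
    (((a, b), false) ∈ T → ((a + b + n) % 2 = 0 → (a + 1, b + 1) ∈ ctr n) ∧
      ((a + b + n) % 2 = 1 → (a, b + 1) ∈ ctr n)) := by
  rw [isTiling_iff] at hT
  constructor
  · intro h
    have h1 := hT.1 a b h
    simp only [mem_cells] at h1
    simp only [mem_ctr]
    constructor <;> intro h0 <;> omega
  · intro h
    have h1 := hT.2.1 a b h
    simp only [mem_cells] at h1
    simp only [mem_ctr]
    constructor <;> intro h0 <;> omega

lemma toT_toτ {q : ℕ} (hq2 : q ≤ n + 1) (T : Set Domino) (hT : IsTiling q T) :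
    toT (toτ n T) = T := by
  ext ⟨⟨a, b⟩, o⟩
  have hd := dom_ctr hq2 T hT a b
  cases o
  · rcases Int.emod_two_eq_zero_or_one (a + b + n) with h0 | h0
    · rw [toT_false0 _ _ _ h0]
      simp only [eL, toτ, add_sub_cancel_right, decide_eq_true_eq, exists_prop]
      tauto
    · rw [toT_false1 _ _ _ h0]
      simp only [eR, toτ, add_sub_cancel_right, decide_eq_true_eq, exists_prop]
      tauto
  · rcases Int.emod_two_eq_zero_or_one (a + b + n) with h0 | h0
    · rw [toT_true0 _ _ _ h0]
      simp only [eB, toτ, add_sub_cancel_right, decide_eq_true_eq, exists_prop]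
      tauto
    · rw [toT_true1 _ _ _ h0]
      simp only [eT, toτ, add_sub_cancel_right, decide_eq_true_eq, exists_prop]
      tauto

/-- The cells covered by `T` lie in the region. -/
lemma covered {q : ℕ} (T : Set Domino) (hT : IsTiling q T) (a b : ℤ) :
    (a, b) ∉ cells q → ((a, b), true) ∉ T ∧ ((a - 1, b), true) ∉ T ∧ ((a, b), false) ∉ T ∧
      ((a, b - 1), false) ∉ T := by
  rw [isTiling_iff] at hT
  intro h
  refine ⟨fun k => h (hT.1 _ _ k).1, fun k => h ?_, fun k => h (hT.2.1 _ _ k).1, fun k => h ?_⟩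
  · simpa using (hT.1 _ _ k).2
  · simpa using (hT.2.1 _ _ k).2

lemma toS_bds {q : ℕ} (hq2 : q ≤ n + 1) (T : Set Domino) (hT : IsTiling q T) :
    toS n q T ∈ bds n q := by
  rw [mem_bds]
  refine ⟨fun c hc => ((mem_toS n q T c.1 c.2).1 hc).1, ?_⟩
  intro a b hc
  have hcov := covered T hT a b
  have d1 := dom_ctr hq2 T hT a b
  have d2 := (dom_ctr hq2 T hT (a - 1) b).1
  have d3 := (dom_ctr hq2 T hT a (b - 1)).2
  simp only [sub_add_cancel] at d2 d3
  have hone := ((isTiling_iff q T).1 hT).2.2 a b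
  unfold One at hone
  constructor
  · intro h0
    have e1 : (a - 1 + b + n) % 2 = 1 := by omega
    have e2 : (a + (b - 1) + n) % 2 = 1 := by omega
    have e3 : (a - 1 + b + n) % 2 ≠ 0 := by omega
    have e4 : (a + (b - 1) + n) % 2 ≠ 0 := by omega
    rw [mem_toS0 n q T a b h0 hc]
    simp only [h0, e1, e2, true_implies, zero_ne_one, one_ne_zero, false_implies, and_true, true_and] at d1 d2 d3
    have hgeo : (a, b) ∉ ctr n → (a + 1, b + 1) ∈ ctr n := by
      rw [mem_cells] at hc
      simp only [mem_ctr]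
      push_cast at hc
      omega
    refine ⟨fun h1 => ⟨?_, fun h2 => ?_⟩, fun h1 => ⟨?_, fun h2 => Or.inr (Or.inr ⟨h1, h2⟩)⟩⟩
    · rintro (k | k | k)
      · by_contra h2; exact (hcov h2).1 k
      · by_contra h2; exact (hcov h2).2.2.1 k
      · exact absurd (hgeo h1) k.1
    · rcases (hone h2).1 with k | k | k | k
      · exact Or.inl k
      · exact absurd (d2 k) h1
      · exact Or.inr (Or.inl k)
      · exact absurd (d3 k) h1
    · rintro (k | k | k)
      · exact absurd (d1.1 k) h1
      · exact absurd (d1.2 k) h1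
      · exact k.2
  · intro h0
    have e1 : (a - 1 + b + n) % 2 = 0 := by omega
    have e2 : (a + (b - 1) + n) % 2 = 0 := by omega
    rw [mem_toS1 n q T a b h0 hc]
    simp only [h0, e1, e2, true_implies, zero_ne_one, one_ne_zero, false_implies, and_true, true_and] at d1 d2 d3
    have hgeo : (a, b + 1) ∉ ctr n → (a + 1, b) ∈ ctr n := by
      rw [mem_cells] at hc
      simp only [mem_ctr]
      push_cast at hc
      omega
    refine ⟨fun h1 => ⟨?_, fun h2 => ?_⟩, fun h1 => ⟨?_, fun h2 => Or.inr (Or.inr ⟨h1, h2⟩)⟩⟩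
    · rintro (k | k | k)
      · by_contra h2; exact (hcov h2).1 k
      · by_contra h2; exact (hcov h2).2.2.2 k
      · exact absurd (hgeo h1) k.1
    · rcases (hone h2).1 with k | k | k | k
      · exact Or.inl k
      · exact absurd (d2 k) h1
      · exact absurd (d1.2 k) h1
      · exact Or.inr (Or.inl k)
    · rintro (k | k | k)
      · exact absurd (d1.1 k) h1
      · exact absurd (d3 k) h1
      · exact k.2

lemma toτ_ok {q : ℕ} (hq1 : n ≤ q) (hq2 : q ≤ n + 1) (T : Set Domino) (hT : IsTiling q T)
    (v : ctr n) : okPat (pat (toS n q T) v) (toτ n T v) = true := by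
  obtain ⟨⟨x, y⟩, hv⟩ := v
  unfold toτ
  rw [ok_iff]
  simp only [decide_eq_true_eq]
  have hv' := hv
  rw [mem_ctr] at hv'
  have c1 : (x - 1, y - 1) ∈ cells (n + 1) := by rw [mem_cells]; push_cast; omega
  have c2 : (x, y - 1) ∈ cells (n + 1) := by rw [mem_cells]; push_cast; omega
  have c3 : (x - 1, y) ∈ cells (n + 1) := by rw [mem_cells]; push_cast; omega
  have c4 : (x, y) ∈ cells (n + 1) := by rw [mem_cells]; push_cast; omega
  have hone := ((isTiling_iff q T).1 hT).2.2
  have hd := dom_ctr hq2 T hT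
  refine ⟨?_, ?_, ?_, ?_⟩
  · rw [mem_toS0 n q T _ _ (by omega) c1]
    refine loc_even' (hone (x - 1) (y - 1)) (covered T hT (x - 1) (y - 1)) ?_
    simpa only [sub_add_cancel, not_not] using hv
  · rw [mem_toS1 n q T _ _ (by omega) c2]
    refine loc_odd (hone x (y - 1)) (covered T hT x (y - 1)) ?_
    rw [mem_cells, mem_ctr]; omega
  · rw [mem_toS1 n q T _ _ (by omega) c3]
    refine loc_odd' (hone (x - 1) y) (covered T hT (x - 1) y) ?_
    simpa only [sub_add_cancel, not_not] using hv
  · rw [mem_toS0 n q T _ _ (by omega) c4]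
    refine loc_even (hone x y) (covered T hT x y) ?_
    rw [mem_cells, mem_ctr]; omega

noncomputable def W (n q : ℕ) : Finset (Σ _ : Finset (ℤ × ℤ), (ctr n → Pat)) :=
  (bds n q).sigma (fun S => Fintype.piFinset
    (fun v : ctr n => Finset.univ.filter (fun t : Pat => okPat (pat S v) t = true)))

lemma mem_W (n q : ℕ) (w : Σ _ : Finset (ℤ × ℤ), (ctr n → Pat)) : w ∈ W n q ↔
    w.1 ∈ bds n q ∧ ∀ v : ctr n, okPat (pat w.1 v) (w.2 v) = true := by
  simp [W]

lemma card_W (n q : ℕ) : (W n q).card = Z n q := by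
  unfold W Z
  rw [Finset.card_sigma]
  refine Finset.sum_congr rfl fun S _ => ?_
  rw [Fintype.card_piFinset]
  exact Finset.prod_coe_sort (ctr n) (fun v => wt (pat S v))

lemma card_tilings {q : ℕ} (hq1 : n ≤ q) (hq2 : q ≤ n + 1) :
    Nat.card {T : Set Domino // IsTiling q T} = Z n q := by
  have e : Nat.card (W n q) = (W n q).card := by simp
  rw [← card_W, ← e]
  symm
  refine Nat.card_eq_of_bijective
    (fun w : W n q => (⟨toT w.1.2, ?_⟩ : {T : Set Domino // IsTiling q T})) ⟨?_, ?_⟩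
  · have hw := (mem_W n q w.1).1 w.2
    exact tiling_of_pair hq1 hq2 w.1.1 w.1.2 ((mem_bds _ _ _).1 hw.1).2 hw.2
  · rintro ⟨⟨S, τ⟩, h1⟩ ⟨⟨S', τ'⟩, h2⟩ h
    have h3 : τ = τ' := toT_inj _ _ (congrArg Subtype.val h)
    subst h3
    have w1 := (mem_W n q _).1 h1
    have w2 := (mem_W n q _).1 h2
    have h4 : S = S' := S_unique S S' τ w1.1 w2.1 w1.2 w2.2
    subst h4
    rfl
  · rintro ⟨T, hT⟩
    refine ⟨⟨⟨toS n q T, toτ n T⟩, (mem_W n q _).2 ⟨toS_bds hq2 T hT, toτ_ok hq1 hq2 T hT⟩⟩, ?_⟩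
    exact Subtype.ext (toT_toτ hq2 T hT)

end count

lemma card_zero : Nat.card {T : Set Domino // IsTiling 0 T} = 1 := by
  rw [Nat.card_eq_one_iff_unique]
  have hc : ∀ a b, (a, b) ∉ cells 0 := by
    intro a b; rw [mem_cells]; push_cast; omega
  have he : ∀ T, IsTiling 0 T ↔ T = ∅ := by
    intro T
    rw [isTiling_iff]
    constructor
    · rintro ⟨h1, h2, -⟩
      ext ⟨⟨a, b⟩, o⟩
      cases o
      · exact ⟨fun h => absurd (h2 a b h).1 (hc _ _), fun h => h.elim⟩
      · exact ⟨fun h => absurd (h1 a b h).1 (hc _ _), fun h => h.elim⟩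
    · rintro rfl
      exact ⟨fun _ _ h => h.elim, fun _ _ h => h.elim, fun a b h => absurd h (hc a b)⟩
  refine ⟨⟨fun T T' => Subtype.ext ?_⟩, ⟨⟨∅, (he _).2 rfl⟩⟩⟩
  rw [(he _).1 T.2, (he _).1 T'.2]

end AztecCount

/-- The number of domino tilings of the Aztec diamond of order `n` is `2^(n(n+1)/2)`. -/
theorem aztec_diamond_count (n : ℕ) :
    Nat.card {T : Set Domino // IsTiling n T} = 2 ^ (n * (n + 1) / 2) := by
  induction n with
  | zero => rw [AztecCount.card_zero]; rfl
  | succ n ih =>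
    rw [AztecCount.card_tilings (n := n) (by omega) le_rfl, AztecCount.Z_rec,
      ← AztecCount.card_tilings (n := n) (q := n) le_rfl (by omega), ih, ← pow_add]
    congr 1
    have : (n + 1) * (n + 1 + 1) = n * (n + 1) + (n + 1) * 2 := by ring
    rw [this, Nat.add_mul_div_right _ _ (by norm_num)]
    ring
end

section
/- The number of domino tilings of the Aztec diamond of order n equals the sum over all n×n alternating sign matrices A of 2^{N₊(A)}, where N₊(A) is the number of +1 entries of A. -/
/-- An alternating sign matrix: entries in `{-1,0,1}`, every row and column sums
to `1`, and the nonzero entries in each row and in each column alternate in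
sign. -/
def IsASM {n : ℕ} (A : Matrix (Fin n) (Fin n) ℤ) : Prop :=
  (∀ i j, A i j = -1 ∨ A i j = 0 ∨ A i j = 1) ∧
  (∀ i, ∑ j, A i j = 1) ∧
  (∀ j, ∑ i, A i j = 1) ∧
  (∀ i j₁ j₂, j₁ < j₂ → A i j₁ ≠ 0 → A i j₂ ≠ 0 →
    (∀ k, j₁ < k → k < j₂ → A i k = 0) → A i j₂ = -A i j₁) ∧
  (∀ j i₁ i₂, i₁ < i₂ → A i₁ j ≠ 0 → A i₂ j ≠ 0 →
    (∀ k, i₁ < k → k < i₂ → A k j = 0) → A i₂ j = -A i₁ j)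

/-- The number of `+1` entries of a matrix. -/
def Nplus {n : ℕ} (A : Matrix (Fin n) (Fin n) ℤ) : ℕ :=
  (Finset.univ.filter (fun p : Fin n × Fin n => A p.1 p.2 = 1)).card

/-- The number of `-1` entries of a matrix. -/
def Nminus {n : ℕ} (A : Matrix (Fin n) (Fin n) ℤ) : ℕ :=
  (Finset.univ.filter (fun p : Fin n × Fin n => A p.1 p.2 = -1)).card


/-- exactly one of four propositions holds -/
def EO (w x y z : Prop) : Prop :=
  (w ∧ ¬x ∧ ¬y ∧ ¬z) ∨ (¬w ∧ x ∧ ¬y ∧ ¬z) ∨ (¬w ∧ ¬x ∧ y ∧ ¬z) ∨ (¬w ∧ ¬x ∧ ¬y ∧ z)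

/-- bottom, top, left, right dominoes of the block `(i,j)` -/
def tB (n : ℕ) (T : Set Domino) (i j : ℤ) : Prop := (((i + j - n, i - j - 1), true) : Domino) ∈ T
def tT (n : ℕ) (T : Set Domino) (i j : ℤ) : Prop := (((i + j - n, i - j), true) : Domino) ∈ T
def tL (n : ℕ) (T : Set Domino) (i j : ℤ) : Prop := (((i + j - n, i - j - 1), false) : Domino) ∈ T
def tR (n : ℕ) (T : Set Domino) (i j : ℤ) : Prop :=
  (((i + j - n + 1, i - j - 1), false) : Domino) ∈ T

def Inside (n : ℕ) (i j : ℤ) : Prop := 0 ≤ i ∧ i < n ∧ 0 ≤ j ∧ j < n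

theorem aztec_lin (n : ℕ) (a b : ℤ) : AztecCell n (a, b) ↔
    a + b + 1 ≤ n ∧ a - b ≤ n ∧ b - a ≤ n ∧ -a - b ≤ n + 1 := by
  simp only [AztecCell, abs_eq_max_neg]
  omega

theorem aztecP (n : ℕ) (i j : ℤ) :
    AztecCell n (i + j - n, i - j - 1) ↔ 0 ≤ i ∧ i ≤ n ∧ 0 ≤ j ∧ j < n := by
  simp only [aztec_lin]
  omega

theorem aztecQ (n : ℕ) (i j : ℤ) :
    AztecCell n (i + j - n, i - j) ↔ 0 ≤ i ∧ i < n ∧ 0 ≤ j ∧ j ≤ n := by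
  simp only [aztec_lin]
  omega

theorem cell_cases (n : ℕ) (c : ℤ × ℤ) :
    (∃ i j : ℤ, c = (i + j - n, i - j - 1)) ∨ (∃ i j : ℤ, c = (i + j - n, i - j)) := by
  obtain ⟨a, b⟩ := c
  rcases Int.emod_two_eq_zero_or_one (a + b + n) with h | h
  · right
    refine ⟨(a + b + n) / 2, (a - b + n) / 2, ?_⟩
    ext <;> simp <;> omega
  · left
    refine ⟨(a + b + n + 1) / 2, (a - b + n - 1) / 2, ?_⟩
    ext <;> simp <;> omega

theorem mem_cells (a b : ℤ) (d : Domino) : (a, b) ∈ dominoCells d ↔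
    d = ((a, b), true) ∨ d = ((a - 1, b), true) ∨ d = ((a, b), false) ∨ d = ((a, b - 1), false) := by
  obtain ⟨⟨x, y⟩, o⟩ := d
  cases o <;> simp [dominoCells] <;> omega

theorem exu_iff (T : Set Domino) (a b : ℤ) : (∃! d, d ∈ T ∧ (a, b) ∈ dominoCells d) ↔
    EO (((a, b), true) ∈ T) (((a - 1, b), true) ∈ T) (((a, b), false) ∈ T)
      (((a, b - 1), false) ∈ T) := by
  simp only [mem_cells]
  have h1 : (((a, b), true) : Domino) ≠ ((a - 1, b), true) := by simp; omega
  have h2 : (((a, b), true) : Domino) ≠ ((a, b), false) := by simp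
  have h3 : (((a, b), true) : Domino) ≠ ((a, b - 1), false) := by simp
  have h4 : (((a - 1, b), true) : Domino) ≠ ((a, b), false) := by simp
  have h5 : (((a - 1, b), true) : Domino) ≠ ((a, b - 1), false) := by simp
  have h6 : (((a, b), false) : Domino) ≠ ((a, b - 1), false) := by simp; omega
  generalize (((a, b), true) : Domino) = w at *
  generalize (((a - 1, b), true) : Domino) = x at *
  generalize (((a, b), false) : Domino) = y at *
  generalize (((a, b - 1), false) : Domino) = z at *
  unfold EO
  constructor
  · rintro ⟨d, ⟨hd, hc⟩, hu⟩
    have hw := hu w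
    have hx := hu x
    have hy := hu y
    have hz := hu z
    simp only at hw hx hy hz
    rcases hc with rfl | rfl | rfl | rfl <;> grind
  · rintro (h | h | h | h)
    · exact ⟨w, ⟨h.1, by simp⟩, by grind⟩
    · exact ⟨x, ⟨h.2.1, by simp⟩, by grind⟩
    · exact ⟨y, ⟨h.2.2.1, by simp⟩, by grind⟩
    · exact ⟨z, ⟨h.2.2.2, by simp⟩, by grind⟩

theorem exuP (n : ℕ) (T : Set Domino) (i j : ℤ) :
    (∃! d, d ∈ T ∧ (i + j - n, i - j - 1) ∈ dominoCells d) ↔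
    EO (tB n T i j) (tT n T (i - 1) j) (tL n T i j) (tR n T (i - 1) j) := by
  rw [exu_iff]
  unfold tB tT tL tR
  ring_nf

theorem exuQ (n : ℕ) (T : Set Domino) (i j : ℤ) :
    (∃! d, d ∈ T ∧ (i + j - n, i - j) ∈ dominoCells d) ↔
    EO (tT n T i j) (tB n T i (j - 1)) (tR n T i (j - 1)) (tL n T i j) := by
  rw [exu_iff]
  unfold tB tT tL tR
  ring_nf

theorem domino_cases (n : ℕ) (d : Domino) :
    (∃ i j : ℤ, d = ((i + j - n, i - j - 1), true)) ∨ (∃ i j : ℤ, d = ((i + j - n, i - j), true)) ∨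
    (∃ i j : ℤ, d = ((i + j - n, i - j - 1), false)) ∨
    (∃ i j : ℤ, d = ((i + j - n + 1, i - j - 1), false)) := by
  obtain ⟨c, o⟩ := d
  cases o
  · rcases cell_cases n c with ⟨i, j, rfl⟩ | ⟨i, j, rfl⟩
    · exact Or.inr (Or.inr (Or.inl ⟨i, j, rfl⟩))
    · refine Or.inr (Or.inr (Or.inr ⟨i, j - 1, ?_⟩))
      ext <;> simp <;> omega
  · rcases cell_cases n c with ⟨i, j, rfl⟩ | ⟨i, j, rfl⟩
    · exact Or.inl ⟨i, j, rfl⟩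
    · exact Or.inr (Or.inl ⟨i, j, rfl⟩)

theorem tiling_iff (n : ℕ) (T : Set Domino) : IsTiling n T ↔
    (∀ i j, tB n T i j → Inside n i j) ∧ (∀ i j, tT n T i j → Inside n i j) ∧
    (∀ i j, tL n T i j → Inside n i j) ∧ (∀ i j, tR n T i j → Inside n i j) ∧
    (∀ i j : ℤ, 0 ≤ i → i ≤ n → 0 ≤ j → j < n →
      EO (tB n T i j) (tT n T (i - 1) j) (tL n T i j) (tR n T (i - 1) j)) ∧
    (∀ i j : ℤ, 0 ≤ i → i < n → 0 ≤ j → j ≤ n →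
      EO (tT n T i j) (tB n T i (j - 1)) (tR n T i (j - 1)) (tL n T i j)) := by
  unfold IsTiling
  constructor
  · rintro ⟨h1, h2⟩
    refine ⟨?_, ?_, ?_, ?_, ?_, ?_⟩
    · intro i j h
      have := h1 _ h
      simp [dominoCells, aztec_lin] at this
      unfold Inside; omega
    · intro i j h
      have := h1 _ h
      simp [dominoCells, aztec_lin] at this
      unfold Inside; omega
    · intro i j h
      have := h1 _ h
      simp [dominoCells, aztec_lin] at this
      unfold Inside; omega
    · intro i j h
      have := h1 _ h
      simp [dominoCells, aztec_lin] at this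
      unfold Inside; omega
    · intro i j a b c d
      rw [← exuP]
      exact h2 _ ((aztecP n i j).2 ⟨a, b, c, d⟩)
    · intro i j a b c d
      rw [← exuQ]
      exact h2 _ ((aztecQ n i j).2 ⟨a, b, c, d⟩)
  · rintro ⟨hB, hT, hL, hR, hP, hQ⟩
    constructor
    · intro d hd
      rcases domino_cases n d with ⟨i, j, rfl⟩ | ⟨i, j, rfl⟩ | ⟨i, j, rfl⟩ | ⟨i, j, rfl⟩
      · have := hB i j hd
        unfold Inside at this
        simp [dominoCells, aztec_lin]
        omega
      · have := hT i j hd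
        unfold Inside at this
        simp [dominoCells, aztec_lin]
        omega
      · have := hL i j hd
        unfold Inside at this
        simp [dominoCells, aztec_lin]
        omega
      · have := hR i j hd
        unfold Inside at this
        simp [dominoCells, aztec_lin]
        omega
    · intro c hc
      rcases cell_cases n c with ⟨i, j, rfl⟩ | ⟨i, j, rfl⟩
      · rw [aztecP] at hc
        rw [exuP]
        exact hP i j hc.1 hc.2.1 hc.2.2.1 hc.2.2.2
      · rw [aztecQ] at hc
        rw [exuQ]
        exact hQ i j hc.1 hc.2.1 hc.2.2.1 hc.2.2.2

theorem set_ext_T (n : ℕ) (T T' : Set Domino) (hB : ∀ i j, tB n T i j ↔ tB n T' i j)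
    (hT : ∀ i j, tT n T i j ↔ tT n T' i j) (hL : ∀ i j, tL n T i j ↔ tL n T' i j)
    (hR : ∀ i j, tR n T i j ↔ tR n T' i j) : T = T' := by
  ext d
  rcases domino_cases n d with ⟨i, j, rfl⟩ | ⟨i, j, rfl⟩ | ⟨i, j, rfl⟩ | ⟨i, j, rfl⟩
  · exact hB i j
  · exact hT i j
  · exact hL i j
  · exact hR i j

theorem exists_T (n : ℕ) (B U L R : ℤ → ℤ → Prop) : ∃ T : Set Domino,
    tB n T = B ∧ tT n T = U ∧ tL n T = L ∧ tR n T = R := by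
  refine ⟨{d | (∃ i j : ℤ, d = ((i + j - n, i - j - 1), true) ∧ B i j) ∨
    (∃ i j : ℤ, d = ((i + j - n, i - j), true) ∧ U i j) ∨
    (∃ i j : ℤ, d = ((i + j - n, i - j - 1), false) ∧ L i j) ∨
    (∃ i j : ℤ, d = ((i + j - n + 1, i - j - 1), false) ∧ R i j)}, ?_, ?_, ?_, ?_⟩
  all_goals
    funext i j
    simp only [tB, tT, tL, tR, Set.mem_ofPred_eq, Prod.mk.injEq, eq_iff_iff]
    constructor
    · rintro (⟨x, y, h, h'⟩ | ⟨x, y, h, h'⟩ | ⟨x, y, h, h'⟩ | ⟨x, y, h, h'⟩)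
      all_goals first
        | (exfalso; simp at h; done)
        | (exfalso; omega)
        | (obtain ⟨rfl, rfl⟩ : x = i ∧ y = j := by omega
           exact h')
    · intro h
      first
        | exact Or.inl ⟨i, j, by simp, h⟩
        | exact Or.inr (Or.inl ⟨i, j, by simp, h⟩)
        | exact Or.inr (Or.inr (Or.inl ⟨i, j, by simp, h⟩))
        | exact Or.inr (Or.inr (Or.inr ⟨i, j, by simp, h⟩))

theorem interval_sum (n : ℕ) (a : ℕ → ℤ)
    (h01 : ∀ i < n, a i = -1 ∨ a i = 0 ∨ a i = 1)
    (halt : ∀ i j, i < j → j < n → a i ≠ 0 → a j ≠ 0 → (∀ k, i < k → k < j → a k = 0) → a j = -a i)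
    (k m : ℕ) (hkm : k ≤ m) (hm : m ≤ n) :
    ((∀ l, k ≤ l → l < m → a l = 0) ∧ ∑ i ∈ Finset.Ico k m, a i = 0) ∨
    ∃ l, k ≤ l ∧ l < m ∧ a l ≠ 0 ∧ (∀ x, l < x → x < m → a x = 0) ∧
      (∑ i ∈ Finset.Ico k m, a i = 0 ∨ ∑ i ∈ Finset.Ico k m, a i = a l) := by
  induction m, hkm using Nat.le_induction with
  | base => left; simp; omega
  | succ m hkm ih =>
    rw [Finset.sum_Ico_succ_top hkm]
    by_cases h0 : a m = 0
    · rcases ih (by omega) with ⟨h1, h2⟩ | ⟨l, h1, h2, h3, h4, h5⟩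
      · left
        refine ⟨fun l _ _ => ?_, by omega⟩
        rcases Nat.lt_succ_iff_lt_or_eq.1 ‹l < m + 1› with h | rfl
        · exact h1 l ‹_› h
        · exact h0
      · right
        refine ⟨l, h1, by omega, h3, fun x _ _ => ?_, by omega⟩
        rcases Nat.lt_succ_iff_lt_or_eq.1 ‹x < m + 1› with h | rfl
        · exact h4 x ‹_› h
        · exact h0
    · right
      refine ⟨m, hkm, by omega, h0, by intros; omega, ?_⟩
      rcases ih (by omega) with ⟨h1, h2⟩ | ⟨l, h1, h2, h3, h4, h5⟩
      · omega
      · have := halt l m h2 (by omega) h3 h0 h4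
        omega

theorem good_iff (n : ℕ) (f : Fin n → ℤ) :
    ((∀ i, f i = -1 ∨ f i = 0 ∨ f i = 1) ∧ (∑ i, f i = 1) ∧
      (∀ j₁ j₂, j₁ < j₂ → f j₁ ≠ 0 → f j₂ ≠ 0 →
        (∀ k, j₁ < k → k < j₂ → f k = 0) → f j₂ = -f j₁)) ↔
    ∃ S : ℤ → ℤ, (∀ k, S k = 0 ∨ S k = 1) ∧ S 0 = 0 ∧ S n = 1 ∧
      ∀ k : Fin n, f k = S ((k : ℕ) + 1) - S (k : ℕ) := by
  constructor
  · rintro ⟨h01, hsum, halt⟩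
    let a : ℕ → ℤ := fun i => if h : i < n then f ⟨i, h⟩ else 0
    have ha : ∀ i : Fin n, a i = f i := fun i => by simp [a]
    have hs1 : ∑ i ∈ Finset.range n, a i = 1 := by
      rw [← hsum, ← Fin.sum_univ_eq_sum_range]
      exact Finset.sum_congr rfl fun i _ => ha i
    have A1 : ∀ i < n, a i = -1 ∨ a i = 0 ∨ a i = 1 := fun i hi => by
      have := h01 ⟨i, hi⟩
      rwa [← ha] at this
    have A2 : ∀ i j, i < j → j < n → a i ≠ 0 → a j ≠ 0 →
        (∀ k, i < k → k < j → a k = 0) → a j = -a i := by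
      intro i j hij hj h1 h2 h3
      have := halt ⟨i, by omega⟩ ⟨j, hj⟩ hij
      rw [← ha, ← ha] at this
      refine this h1 h2 fun k hk1 hk2 => ?_
      rw [← ha]
      exact h3 k hk1 hk2
    have key : ∀ k m, k ≤ m → m ≤ n → -1 ≤ ∑ i ∈ Finset.Ico k m, a i ∧
        ∑ i ∈ Finset.Ico k m, a i ≤ 1 := by
      intro k m h1 h2
      rcases interval_sum n a A1 A2 k m h1 h2 with ⟨_, h⟩ | ⟨l, h3, h4, h5, h6, h7⟩
      · omega
      · have := A1 l (by omega)
        omega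
    refine ⟨fun k => if k ≤ n then ∑ i ∈ Finset.range k.toNat, a i else 0, ?_, ?_, ?_, ?_⟩
    · intro k
      simp only
      split_ifs with hk
      · have h1 := key 0 k.toNat (by omega) (by omega)
        have h2 := key k.toNat n (by omega) le_rfl
        have h3 := Finset.sum_range_add_sum_Ico a (show k.toNat ≤ n by omega)
        rw [← Finset.range_eq_Ico] at h1
        omega
      · left; rfl
    · simp
    · simp [hs1]
    · intro k
      have e : ((k : ℕ) + 1 : ℤ).toNat = k + 1 := by omega
      have hk := k.2
      simp only [e, Int.toNat_natCast]
      rw [if_pos (by omega), if_pos (by omega), Finset.sum_range_succ, ha]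
      ring
  · rintro ⟨S, h01, h0, hn, hf⟩
    refine ⟨?_, ?_, ?_⟩
    · intro i
      have := h01 (i : ℕ)
      have := h01 ((i : ℕ) + 1)
      have := hf i
      omega
    · have h : ∑ i, f i = ∑ i ∈ Finset.range n, (S ((i + 1 : ℕ) : ℤ) - S (i : ℕ)) := by
        rw [← Fin.sum_univ_eq_sum_range (fun i : ℕ => S ((i + 1 : ℕ) : ℤ) - S (i : ℕ))]
        refine Finset.sum_congr rfl fun i _ => ?_
        rw [hf]; push_cast; rfl
      rw [h, Finset.sum_range_sub (fun i : ℕ => S (i : ℤ))]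
      simp [h0, hn]
    · intro i j hij hi hj hz
      have key : ∀ m : ℕ, (i : ℕ) + 1 ≤ m → m ≤ j → S m = S ((i : ℕ) + 1) := by
        intro m hm
        induction m, hm using Nat.le_induction with
        | base => intro _; simp
        | succ m hm ih =>
          intro hmj
          have e := hz ⟨m, by omega⟩ (Fin.lt_def.2 (by simp; omega)) (Fin.lt_def.2 (by simp; omega))
          rw [hf] at e
          simp only at e
          have := ih (by omega)
          push_cast
          omega
      have k1 := key j hij le_rfl
      have := hf i
      have := hf j
      have := h01 (i : ℕ)
      have := h01 ((j : ℕ) + 1)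
      have := h01 (j : ℕ)
      omega

theorem S_unique (n : ℕ) (S S' : ℤ → ℤ) (h : S 0 = S' 0)
    (hs : ∀ k : ℤ, 0 ≤ k → k < n → S (k + 1) - S k = S' (k + 1) - S' k) :
    ∀ k : ℤ, 0 ≤ k → k ≤ n → S k = S' k := by
  intro k hk
  lift k to ℕ using hk
  induction k with
  | zero => intro _; simpa using h
  | succ m ih =>
    intro hm
    have := hs m (by omega) (by push_cast at hm; omega)
    have := ih (by push_cast at hm; omega)
    push_cast
    omega

theorem asm_iff (n : ℕ) (A : Matrix (Fin n) (Fin n) ℤ) : IsASM A ↔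
    ∃ p q : ℤ → ℤ → ℤ, (∀ i j, p i j = 0 ∨ p i j = 1) ∧ (∀ i j, q i j = 0 ∨ q i j = 1) ∧
      (∀ j : ℤ, 0 ≤ j → j < n → p 0 j = 0 ∧ p n j = 1) ∧
      (∀ i : ℤ, 0 ≤ i → i < n → q i 0 = 0 ∧ q i n = 1) ∧
      ∀ i j : Fin n, A i j = p ((i : ℕ) + 1) (j : ℕ) - p (i : ℕ) (j : ℕ) ∧
        A i j = q (i : ℕ) ((j : ℕ) + 1) - q (i : ℕ) (j : ℕ) := by
  constructor
  · rintro ⟨h1, h2, h3, h4, h5⟩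
    have hr := fun i => (good_iff n (fun j => A i j)).1 ⟨h1 i, h2 i, h4 i⟩
    have hc := fun j => (good_iff n (fun i => A i j)).1 ⟨fun i => h1 i j, h3 j, h5 j⟩
    choose q hq1 hq2 hq3 hq4 using hr
    choose p hp1 hp2 hp3 hp4 using hc
    refine ⟨fun i j => if h : 0 ≤ j ∧ j < n then p ⟨j.toNat, by omega⟩ i else 0,
      fun i j => if h : 0 ≤ i ∧ i < n then q ⟨i.toNat, by omega⟩ j else 0, ?_, ?_, ?_, ?_, ?_⟩
    · intro i j
      simp only
      split_ifs
      · exact hp1 _ _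
      · left; rfl
    · intro i j
      simp only
      split_ifs
      · exact hq1 _ _
      · left; rfl
    · intro j ha hb
      simp [ha, hb, hp2, hp3]
    · intro j ha hb
      simp [ha, hb, hq2, hq3]
    · intro i j
      simp [hp4 j i]
      simpa [hp4 j i] using hq4 i j
  · rintro ⟨p, q, hp, hq, hpb, hqb, hA⟩
    have hr := fun i : Fin n => (good_iff n (fun j => A i j)).2
      ⟨q (i : ℕ), hq _, (hqb _ (by omega) (by omega)).1, (hqb _ (by omega) (by omega)).2,
        fun j => (hA i j).2⟩
    have hc := fun j : Fin n => (good_iff n (fun i => A i j)).2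
      ⟨fun i => p i (j : ℕ), fun i => hp _ _, (hpb _ (by omega) (by omega)).1,
        (hpb _ (by omega) (by omega)).2, fun i => (hA i j).1⟩
    exact ⟨fun i j => (hr i).1 j, fun i => (hr i).2.1, fun j => (hc j).2.1,
      fun i => (hr i).2.2, fun j => (hc j).2.2⟩

open Classical in
/-- column heights of a tiling -/
noncomputable def pT (n : ℕ) (T : Set Domino) (i j : ℤ) : ℤ :=
  if tB n T i j ∨ tL n T i j then 0 else 1

open Classical in
/-- row heights of a tiling -/
noncomputable def qT (n : ℕ) (T : Set Domino) (i j : ℤ) : ℤ :=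
  if tT n T i j ∨ tL n T i j then 0 else 1

/-- the matrix of a tiling -/
noncomputable def matT (n : ℕ) (T : Set Domino) : Matrix (Fin n) (Fin n) ℤ :=
  fun i j => pT n T ((i : ℕ) + 1) (j : ℕ) - pT n T (i : ℕ) (j : ℕ)

open Classical in
/-- the set of blocks with two horizontal dominoes -/
noncomputable def setT (n : ℕ) (T : Set Domino) : Finset (Fin n × Fin n) :=
  Finset.univ.filter fun x => tB n T (x.1 : ℕ) (x.2 : ℕ) ∧ tT n T (x.1 : ℕ) (x.2 : ℕ)

theorem p01 (n : ℕ) (T : Set Domino) (i j : ℤ) : pT n T i j = 0 ∨ pT n T i j = 1 := by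
  unfold pT; split_ifs <;> simp

theorem q01 (n : ℕ) (T : Set Domino) (i j : ℤ) : qT n T i j = 0 ∨ qT n T i j = 1 := by
  unfold qT; split_ifs <;> simp

/-- local facts at an inside block -/
theorem local_facts {n : ℕ} {T : Set Domino} (h : IsTiling n T) {i j : ℤ} (hi : Inside n i j) :
    (pT n T i j = 0 ↔ tB n T i j ∨ tL n T i j) ∧
    (pT n T (i + 1) j = 1 ↔ tT n T i j ∨ tR n T i j) ∧
    (qT n T i j = 0 ↔ tT n T i j ∨ tL n T i j) ∧
    (qT n T i (j + 1) = 1 ↔ tB n T i j ∨ tR n T i j) ∧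
    ¬(tB n T i j ∧ tL n T i j) ∧ ¬(tB n T i j ∧ tR n T i j) ∧
    ¬(tT n T i j ∧ tL n T i j) ∧ ¬(tT n T i j ∧ tR n T i j) := by
  obtain ⟨_, _, _, _, hP, hQ⟩ := (tiling_iff n T).1 h
  unfold Inside at hi
  have e1 := hP i j (by omega) (by omega) (by omega) (by omega)
  have e2 := hP (i + 1) j (by omega) (by omega) (by omega) (by omega)
  have e3 := hQ i j (by omega) (by omega) (by omega) (by omega)
  have e4 := hQ i (j + 1) (by omega) (by omega) (by omega) (by omega)
  simp only [add_sub_cancel_right] at e2 e4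
  unfold EO at e1 e2 e3 e4
  unfold pT qT
  clear hP hQ h hi
  generalize tB n T i j = B at *
  generalize tT n T i j = U at *
  generalize tL n T i j = L at *
  generalize tR n T i j = R at *
  refine ⟨?_, ?_, ?_, ?_, ?_, ?_, ?_, ?_⟩
  · clear e1 e2 e3 e4; grind
  · clear e1 e3 e4; grind
  · clear e1 e2 e3 e4; grind
  · clear e1 e3 e2; grind
  · clear e2 e3 e4; grind
  · clear e1 e2 e3; grind
  · clear e1 e2 e4; grind
  · clear e1 e3 e4; grind

theorem p_bd {n : ℕ} {T : Set Domino} (h : IsTiling n T) {j : ℤ} (h1 : 0 ≤ j) (h2 : j < n) :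
    pT n T 0 j = 0 ∧ pT n T n j = 1 := by
  obtain ⟨iB, iT, iL, iR, hP, hQ⟩ := (tiling_iff n T).1 h
  constructor
  · have e1 := hP 0 j (by omega) (by omega) (by omega) (by omega)
    have a := iT (0 - 1) j
    have b := iR (0 - 1) j
    have c : ¬ Inside n (0 - 1) j := by unfold Inside; omega
    unfold EO at e1
    unfold pT
    rw [if_pos]
    tauto
  · have a := iB n j
    have b := iL n j
    have c : ¬ Inside n n j := by unfold Inside; omega
    unfold pT
    rw [if_neg]
    tauto

theorem q_bd {n : ℕ} {T : Set Domino} (h : IsTiling n T) {i : ℤ} (h1 : 0 ≤ i) (h2 : i < n) :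
    qT n T i 0 = 0 ∧ qT n T i n = 1 := by
  obtain ⟨iB, iT, iL, iR, hP, hQ⟩ := (tiling_iff n T).1 h
  constructor
  · have e1 := hQ i 0 (by omega) (by omega) (by omega) (by omega)
    have a := iB i (0 - 1)
    have b := iR i (0 - 1)
    have c : ¬ Inside n i (0 - 1) := by unfold Inside; omega
    unfold EO at e1
    unfold qT
    rw [if_pos]
    tauto
  · have a := iT i n
    have b := iL i n
    have c : ¬ Inside n i n := by unfold Inside; omega
    unfold qT
    rw [if_neg]
    tauto

theorem pq_rel {n : ℕ} {T : Set Domino} (h : IsTiling n T) {i j : ℤ} (hi : Inside n i j) :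
    pT n T (i + 1) j - pT n T i j = qT n T i (j + 1) - qT n T i j := by
  obtain ⟨h1, h2, h3, h4, h5, h6, h7, h8⟩ := local_facts h hi
  rcases p01 n T i j with a | a <;> rcases p01 n T (i + 1) j with b | b <;>
  rcases q01 n T i j with c | c <;> rcases q01 n T i (j + 1) with d | d <;>
  simp only [a, b, c, d] at h1 h2 h3 h4 ⊢ <;> simp at h1 h2 h3 h4 ⊢ <;> tauto

theorem inside_fin {n : ℕ} (i j : Fin n) : Inside n (i : ℕ) (j : ℕ) := by
  unfold Inside; omega

theorem fin_of_inside {n : ℕ} {i j : ℤ} (h : Inside n i j) :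
    ∃ a b : Fin n, i = (a : ℕ) ∧ j = (b : ℕ) := by
  unfold Inside at h
  exact ⟨⟨i.toNat, by omega⟩, ⟨j.toNat, by omega⟩, by simp; omega, by simp; omega⟩

theorem mat_asm {n : ℕ} {T : Set Domino} (h : IsTiling n T) : IsASM (matT n T) := by
  rw [asm_iff]
  refine ⟨pT n T, qT n T, p01 n T, q01 n T, fun j => p_bd h, fun i => q_bd h, fun i j => ⟨rfl, ?_⟩⟩
  exact pq_rel h (inside_fin i j)

theorem set_sub {n : ℕ} {T : Set Domino} (h : IsTiling n T) :
    ∀ x ∈ setT n T, matT n T x.1 x.2 = 1 := by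
  intro x hx
  simp only [setT, Finset.mem_filter, Finset.mem_univ, true_and] at hx
  obtain ⟨h1, h2, -⟩ := local_facts h (inside_fin x.1 x.2)
  unfold matT
  rw [h1.2 (Or.inl hx.1), h2.2 (Or.inl hx.2)]
  rfl

theorem inj_T {n : ℕ} {T T' : Set Domino} (h : IsTiling n T) (h' : IsTiling n T')
    (hA : matT n T = matT n T') (hS : setT n T = setT n T') : T = T' := by
  have hd : ∀ i j, Inside n i j →
      pT n T (i + 1) j - pT n T i j = pT n T' (i + 1) j - pT n T' i j := by
    intro i j hi
    obtain ⟨a, b, rfl, rfl⟩ := fin_of_inside hi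
    exact congrFun (congrFun hA a) b
  have hp : ∀ i j : ℤ, 0 ≤ j → j < n → 0 ≤ i → i ≤ n → pT n T i j = pT n T' i j := by
    intro i j h1 h2 h3 h4
    refine S_unique n (fun i => pT n T i j) (fun i => pT n T' i j) ?_ ?_ i h3 h4
    · rw [(p_bd h h1 h2).1, (p_bd h' h1 h2).1]
    · intro k _ _
      exact hd k j (by unfold Inside; omega)
  have hq : ∀ i j : ℤ, 0 ≤ i → i < n → 0 ≤ j → j ≤ n → qT n T i j = qT n T' i j := by
    intro i j h1 h2 h3 h4
    refine S_unique n (fun j => qT n T i j) (fun j => qT n T' i j) ?_ ?_ j h3 h4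
    · rw [(q_bd h h1 h2).1, (q_bd h' h1 h2).1]
    · intro k _ _
      have hi : Inside n i k := by unfold Inside; omega
      rw [← pq_rel h hi, ← pq_rel h' hi]
      exact hd i k hi
  have hs : ∀ i j, Inside n i j → (tB n T i j ∧ tT n T i j ↔ tB n T' i j ∧ tT n T' i j) := by
    intro i j hi
    obtain ⟨a, b, rfl, rfl⟩ := fin_of_inside hi
    have := Finset.ext_iff.1 hS (a, b)
    simpa [setT] using this
  have key : ∀ i j, (tB n T i j ↔ tB n T' i j) ∧ (tT n T i j ↔ tT n T' i j) ∧
      (tL n T i j ↔ tL n T' i j) ∧ (tR n T i j ↔ tR n T' i j) := by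
    intro i j
    by_cases hi : Inside n i j
    · obtain ⟨h1, h2, h3, h4, h5, h6, h7, h8⟩ := local_facts h hi
      obtain ⟨h1', h2', h3', h4', h5', h6', h7', h8'⟩ := local_facts h' hi
      have s := hs i j hi
      unfold Inside at hi
      rw [hp _ _ (by omega) (by omega) (by omega) (by omega), h1'] at h1
      rw [hp _ _ (by omega) (by omega) (by omega) (by omega), h2'] at h2
      rw [hq _ _ (by omega) (by omega) (by omega) (by omega), h3'] at h3
      rw [hq _ _ (by omega) (by omega) (by omega) (by omega), h4'] at h4
      clear h1' h2' h3' h4' hp hq hd hs hA hS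
      generalize tB n T i j = B at *
      generalize tT n T i j = U at *
      generalize tL n T i j = L at *
      generalize tR n T i j = R at *
      generalize tB n T' i j = B' at *
      generalize tT n T' i j = U' at *
      generalize tL n T' i j = L' at *
      generalize tR n T' i j = R' at *
      clear h h' hi
      grind
    · obtain ⟨iB, iT, iL, iR, -, -⟩ := (tiling_iff n T).1 h
      obtain ⟨iB', iT', iL', iR', -, -⟩ := (tiling_iff n T').1 h'
      exact ⟨⟨fun x => absurd (iB _ _ x) hi, fun x => absurd (iB' _ _ x) hi⟩,
        ⟨fun x => absurd (iT _ _ x) hi, fun x => absurd (iT' _ _ x) hi⟩,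
        ⟨fun x => absurd (iL _ _ x) hi, fun x => absurd (iL' _ _ x) hi⟩,
        ⟨fun x => absurd (iR _ _ x) hi, fun x => absurd (iR' _ _ x) hi⟩⟩
  exact set_ext_T n T T' (fun i j => (key i j).1) (fun i j => (key i j).2.1)
    (fun i j => (key i j).2.2.1) (fun i j => (key i j).2.2.2)

theorem surj_T {n : ℕ} (A : Matrix (Fin n) (Fin n) ℤ) (hA : IsASM A)
    (S : Finset (Fin n × Fin n)) (hS : ∀ x ∈ S, A x.1 x.2 = 1) :
    ∃ T, IsTiling n T ∧ matT n T = A ∧ setT n T = S := by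
  obtain ⟨p, q, p01, q01, pb, qb, hpq⟩ := (asm_iff n A).1 hA
  have rel : ∀ i j, Inside n i j → p (i + 1) j - p i j = q i (j + 1) - q i j := by
    intro i j hi
    obtain ⟨a, b, rfl, rfl⟩ := fin_of_inside hi
    rw [← (hpq a b).1, ← (hpq a b).2]
  let Sc : ℤ → ℤ → Prop := fun i j => ∃ a b : Fin n, (a, b) ∈ S ∧ i = (a : ℕ) ∧ j = (b : ℕ)
  obtain ⟨T, hB, hU, hL, hR⟩ := exists_T n
    (fun i j => Inside n i j ∧ p i j = 0 ∧ q i (j + 1) = 1 ∧ (p (i + 1) j = 1 → Sc i j))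
    (fun i j => Inside n i j ∧ p (i + 1) j = 1 ∧ q i j = 0 ∧ (p i j = 0 → Sc i j))
    (fun i j => Inside n i j ∧ p i j = 0 ∧ q i j = 0 ∧ (p (i + 1) j = 1 → ¬ Sc i j))
    (fun i j => Inside n i j ∧ p (i + 1) j = 1 ∧ q i (j + 1) = 1 ∧ (p i j = 0 → ¬ Sc i j))
  have iB : ∀ i j, ¬ Inside n i j → ¬ tB n T i j := fun i j h => by rw [hB]; exact fun x => h x.1
  have iU : ∀ i j, ¬ Inside n i j → ¬ tT n T i j := fun i j h => by rw [hU]; exact fun x => h x.1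
  have iL : ∀ i j, ¬ Inside n i j → ¬ tL n T i j := fun i j h => by rw [hL]; exact fun x => h x.1
  have iR : ∀ i j, ¬ Inside n i j → ¬ tR n T i j := fun i j h => by rw [hR]; exact fun x => h x.1
  have loc : ∀ i j, Inside n i j →
      (p i j = 0 ↔ tB n T i j ∨ tL n T i j) ∧ (p (i + 1) j = 1 ↔ tT n T i j ∨ tR n T i j) ∧
      (q i j = 0 ↔ tT n T i j ∨ tL n T i j) ∧ (q i (j + 1) = 1 ↔ tB n T i j ∨ tR n T i j) ∧
      ¬(tB n T i j ∧ tL n T i j) ∧ ¬(tB n T i j ∧ tR n T i j) ∧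
      ¬(tT n T i j ∧ tL n T i j) ∧ ¬(tT n T i j ∧ tR n T i j) := by
    intro i j hi
    have r := rel i j hi
    rw [hB, hU, hL, hR]
    simp only [hi, true_and]
    generalize Sc i j = s
    rcases p01 i j with a | a <;> rcases p01 (i + 1) j with b | b <;>
    rcases q01 i j with c | c <;> rcases q01 i (j + 1) with d | d <;>
    simp [a, b, c, d] at r ⊢ <;> tauto
  have hT : IsTiling n T := by
    rw [tiling_iff]
    refine ⟨fun i j h => by rw [hB] at h; exact h.1, fun i j h => by rw [hU] at h; exact h.1,
      fun i j h => by rw [hL] at h; exact h.1, fun i j h => by rw [hR] at h; exact h.1, ?_, ?_⟩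
    · intro i j h1 h2 h3 h4
      have hd : (p i j = 0 ↔ tB n T i j ∨ tL n T i j) ∧ ¬(tB n T i j ∧ tL n T i j) := by
        by_cases hi : Inside n i j
        · exact ⟨(loc i j hi).1, (loc i j hi).2.2.2.2.1⟩
        · have e : i = n := by unfold Inside at hi; omega
          have := iB i j hi
          have := iL i j hi
          have := (pb j h3 h4).2
          rw [← e] at this
          simp [*]
      have hu : (p i j = 1 ↔ tT n T (i - 1) j ∨ tR n T (i - 1) j) ∧
          ¬(tT n T (i - 1) j ∧ tR n T (i - 1) j) := by
        by_cases hi : Inside n (i - 1) j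
        · have := loc (i - 1) j hi
          rw [sub_add_cancel] at this
          exact ⟨this.2.1, this.2.2.2.2.2.2.2⟩
        · have e : i = 0 := by unfold Inside at hi; omega
          have := iU (i - 1) j hi
          have := iR (i - 1) j hi
          have := (pb j h3 h4).1
          rw [← e] at this
          simp [*]
      unfold EO
      rcases p01 i j with a | a <;> simp only [a] at hd hu <;> simp at hd hu <;> clear * - hd hu <;> grind
    · intro i j h1 h2 h3 h4
      have hd : (q i j = 0 ↔ tT n T i j ∨ tL n T i j) ∧ ¬(tT n T i j ∧ tL n T i j) := by
        by_cases hi : Inside n i j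
        · exact ⟨(loc i j hi).2.2.1, (loc i j hi).2.2.2.2.2.2.1⟩
        · have e : j = n := by unfold Inside at hi; omega
          have := iU i j hi
          have := iL i j hi
          have := (qb i h1 h2).2
          rw [← e] at this
          simp [*]
      have hu : (q i j = 1 ↔ tB n T i (j - 1) ∨ tR n T i (j - 1)) ∧
          ¬(tB n T i (j - 1) ∧ tR n T i (j - 1)) := by
        by_cases hi : Inside n i (j - 1)
        · have := loc i (j - 1) hi
          rw [sub_add_cancel] at this
          exact ⟨this.2.2.2.1, this.2.2.2.2.2.1⟩
        · have e : j = 0 := by unfold Inside at hi; omega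
          have := iB i (j - 1) hi
          have := iR i (j - 1) hi
          have := (qb i h1 h2).1
          rw [← e] at this
          simp [*]
      unfold EO
      rcases q01 i j with a | a <;> simp only [a] at hd hu <;> simp at hd hu <;> clear * - hd hu <;> grind
  refine ⟨T, hT, ?_, ?_⟩
  · ext a b
    have hi := inside_fin a b
    rw [(hpq a b).1]
    unfold matT
    obtain ⟨l1, l2, -⟩ := loc _ _ hi
    obtain ⟨m1, m2, -⟩ := local_facts hT hi
    rw [← l1] at m1
    rw [← l2] at m2
    have := _root_.p01 n T (a : ℕ) (b : ℕ)
    have := _root_.p01 n T ((a : ℕ) + 1) (b : ℕ)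
    have := p01 (a : ℕ) (b : ℕ)
    have := p01 ((a : ℕ) + 1) (b : ℕ)
    omega
  · ext ⟨a, b⟩
    have hi := inside_fin a b
    have hSc : Sc (a : ℕ) (b : ℕ) ↔ (a, b) ∈ S := by
      constructor
      · rintro ⟨a', b', h, h1, h2⟩
        obtain rfl : a = a' := Fin.ext (by omega)
        obtain rfl : b = b' := Fin.ext (by omega)
        exact h
      · exact fun h => ⟨a, b, h, rfl, rfl⟩
    simp only [setT, Finset.mem_filter, Finset.mem_univ, true_and]
    rw [hB, hU]
    simp only [hi, true_and, hSc]
    constructor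
    · rintro ⟨h1, h2⟩
      exact h2.2.2 h1.1
    · intro h
      have e := hS _ h
      simp only at e
      have e1 := (hpq a b).1
      have e2 := (hpq a b).2
      have := p01 (a : ℕ) (b : ℕ)
      have := p01 ((a : ℕ) + 1) (b : ℕ)
      have := q01 (a : ℕ) (b : ℕ)
      have := q01 (a : ℕ) ((b : ℕ) + 1)
      exact ⟨⟨by omega, by omega, fun _ => h⟩, ⟨by omega, by omega, fun _ => h⟩⟩

theorem asm_finite (n : ℕ) : {A : Matrix (Fin n) (Fin n) ℤ | IsASM A}.Finite := by
  have : {A : Fin n → Fin n → ℤ | ∀ i, A i ∈ {r : Fin n → ℤ | ∀ j, r j ∈ Set.Icc (-1 : ℤ) 1}}.Finite :=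
    Set.Finite.pi' fun _ => Set.Finite.pi' fun _ => Set.finite_Icc _ _
  refine this.subset fun A hA i j => ?_
  have := hA.1 i j
  rw [Set.mem_Icc]
  omega

open Classical in
/-- The number of domino tilings of the Aztec diamond of order `n` equals
`Σ_A 2^{N₊(A)}`, the sum over all `n×n` alternating sign matrices `A` of `2` to
the number of `+1` entries of `A`. -/
theorem aztec_count_eq_sum_Nplus (n : ℕ) :
    Nat.card {T : Set Domino // IsTiling n T} =
      ∑ᶠ A : Matrix (Fin n) (Fin n) ℤ, (if IsASM A then 2 ^ Nplus A else 0) := by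
  let s := (asm_finite n).toFinset
  let F := s.sigma fun A : Matrix (Fin n) (Fin n) ℤ =>
    (Finset.univ.filter (fun p : Fin n × Fin n => A p.1 p.2 = 1)).powerset
  have hF : F.card = ∑ A ∈ s, 2 ^ Nplus A := by
    simp only [F, Finset.card_sigma, Finset.card_powerset]
    rfl
  have hR : ∑ᶠ A : Matrix (Fin n) (Fin n) ℤ, (if IsASM A then 2 ^ Nplus A else 0) =
      ∑ A ∈ s, 2 ^ Nplus A := by
    rw [finsum_eq_sum_of_support_subset (s := s)]
    · refine Finset.sum_congr rfl fun A hA => ?_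
      have h' : IsASM A := (asm_finite n).mem_toFinset.1 hA
      rw [if_pos h']
    · intro A hA
      simp only [Function.mem_support] at hA
      by_contra h
      apply hA
      rw [if_neg]
      intro h'
      exact h ((asm_finite n).mem_toFinset.2 h')
  rw [hR, ← hF, ← Nat.card_eq_finsetCard]
  have hmem : ∀ x, x ∈ F ↔ IsASM x.1 ∧ ∀ y ∈ x.2, x.1 y.1 y.2 = 1 := by
    intro x
    simp only [F, s, Finset.mem_sigma, Finset.mem_powerset, Set.Finite.mem_toFinset]
    simp [Finset.subset_iff]
  refine Nat.card_eq_of_bijective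
    (fun T : {T : Set Domino // IsTiling n T} => (⟨⟨matT n T.1, setT n T.1⟩,
      (hmem _).2 ⟨mat_asm T.2, set_sub T.2⟩⟩ : F)) ⟨?_, ?_⟩
  · intro T T' h
    simp only [Subtype.mk.injEq, Sigma.mk.injEq, heq_eq_eq] at h
    exact Subtype.ext (inj_T T.2 T'.2 h.1 h.2)
  · rintro ⟨⟨A, S⟩, h⟩
    rw [hmem] at h
    obtain ⟨T, hT, rfl, rfl⟩ := surj_T A h.1 S h.2
    exact ⟨⟨T, hT⟩, rfl⟩
end

section
/- The sum over all n×n alternating sign matrices A of 2^{N₋(A)} equals 2^{n(n−1)/2}, where N₋(A) is the number of −1 entries of A. -/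
/-- Extension of a matrix by zero. -/
def extM {n : ℕ} (A : Matrix (Fin n) (Fin n) ℤ) (i j : ℕ) : ℤ :=
  if h : i < n ∧ j < n then A ⟨i, h.1⟩ ⟨j, h.2⟩ else 0

/-- Corner sums. -/
def cs {n : ℕ} (A : Matrix (Fin n) (Fin n) ℤ) (i j : ℕ) : ℤ :=
  ∑ k ∈ Finset.range i, ∑ l ∈ Finset.range j, extM A k l

/-- Corner sum matrices of ASMs. -/
structure CSP (n : ℕ) (h : ℕ → ℕ → ℤ) : Prop where
  z1 : ∀ j ≤ n, h 0 j = 0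
  z2 : ∀ i ≤ n, h i 0 = 0
  b1 : ∀ j ≤ n, h n j = j
  b2 : ∀ i ≤ n, h i n = i
  r1 : ∀ i j, i < n → j ≤ n → h i j ≤ h (i+1) j
  r2 : ∀ i j, i < n → j ≤ n → h (i+1) j ≤ h i j + 1
  c1 : ∀ i j, i ≤ n → j < n → h i j ≤ h i (j+1)
  c2 : ∀ i j, i ≤ n → j < n → h i (j+1) ≤ h i j + 1

/-- Compatibility of corner sum matrices of consecutive sizes. -/
def CRel (n : ℕ) (g h : ℕ → ℕ → ℤ) : Prop :=
  ∀ i j, i ≤ n → j ≤ n → h i j ≤ g i j ∧ h (i+1) (j+1) ≤ g i j + 1 ∧ g i j ≤ h i (j+1) ∧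
    g i j ≤ h (i+1) j

/-- The matrix with given corner sums. -/
def diffM (n : ℕ) (h : ℕ → ℕ → ℤ) : Matrix (Fin n) (Fin n) ℤ :=
  fun i j => h (i+1) (j+1) - h i (j+1) - h (i+1) j + h i j

lemma extM_fin {n : ℕ} (A : Matrix (Fin n) (Fin n) ℤ) (i j : Fin n) : extM A i j = A i j := by
  simp [extM]

lemma extM_out1 {n : ℕ} (A : Matrix (Fin n) (Fin n) ℤ) (i j : ℕ) (h : n ≤ i) :
    extM A i j = 0 := by
  simp [extM]; omega

lemma extM_out2 {n : ℕ} (A : Matrix (Fin n) (Fin n) ℤ) (i j : ℕ) (h : n ≤ j) :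
    extM A i j = 0 := by
  simp [extM]; omega

lemma cs_zero1 {n : ℕ} (A : Matrix (Fin n) (Fin n) ℤ) (j : ℕ) : cs A 0 j = 0 := by simp [cs]
lemma cs_zero2 {n : ℕ} (A : Matrix (Fin n) (Fin n) ℤ) (i : ℕ) : cs A i 0 = 0 := by simp [cs]

lemma cs_row {n : ℕ} (A : Matrix (Fin n) (Fin n) ℤ) (i j : ℕ) :
    cs A (i+1) j = cs A i j + ∑ l ∈ Finset.range j, extM A i l := by
  simp [cs, Finset.sum_range_succ]

lemma cs_col {n : ℕ} (A : Matrix (Fin n) (Fin n) ℤ) (i j : ℕ) :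
    cs A i (j+1) = cs A i j + ∑ k ∈ Finset.range i, extM A k j := by
  simp [cs, Finset.sum_range_succ, Finset.sum_add_distrib]

lemma cs_entry {n : ℕ} (A : Matrix (Fin n) (Fin n) ℤ) (i j : ℕ) :
    extM A i j = cs A (i+1) (j+1) - cs A i (j+1) - cs A (i+1) j + cs A i j := by
  rw [cs_row, cs_row, Finset.sum_range_succ]; ring

lemma diffM_cs {n : ℕ} (A : Matrix (Fin n) (Fin n) ℤ) : diffM n (cs A) = A := by
  ext i j
  rw [diffM, ← cs_entry, extM_fin]

lemma diffM_congr {n : ℕ} {g h : ℕ → ℕ → ℤ} (H : ∀ i j, i ≤ n → j ≤ n → g i j = h i j) :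
    diffM n g = diffM n h := by
  ext i j
  have := i.2
  have := j.2
  simp only [diffM]
  rw [H, H, H, H] <;> omega

lemma cs_diffM {n : ℕ} (h : ℕ → ℕ → ℤ) (z1 : ∀ j ≤ n, h 0 j = 0) (z2 : ∀ i ≤ n, h i 0 = 0)
    (i : ℕ) : ∀ j, i ≤ n → j ≤ n → cs (diffM n h) i j = h i j := by
  induction i with
  | zero => intro j _ hj; rw [cs_zero1, z1 j hj]
  | succ i ih =>
    intro j hi
    induction j with
    | zero => intro _; rw [cs_zero2, z2 _ hi]
    | succ j jh =>
      intro hj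
      have e := cs_entry (diffM n h) i j
      have e2 : extM (diffM n h) i j = h (i+1) (j+1) - h i (j+1) - h (i+1) j + h i j := by
        rw [extM, dif_pos ⟨by omega, by omega⟩]; rfl
      rw [e2, jh (by omega), ih j (by omega) (by omega), ih (j+1) (by omega) hj] at e
      linarith

/-- one dimensional lemma -/
lemma alt_forward (a : ℕ → ℤ) (n : ℕ) (h0 : ∀ j, a j = -1 ∨ a j = 0 ∨ a j = 1)
    (hs : ∑ l ∈ Finset.range n, a l = 1)
    (halt : ∀ j₁ j₂, j₁ < j₂ → a j₁ ≠ 0 → a j₂ ≠ 0 → (∀ k, j₁ < k → k < j₂ → a k = 0) →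
      a j₂ = - a j₁) (k : ℕ) (hk : k ≤ n) :
    0 ≤ ∑ l ∈ Finset.range k, a l ∧ ∑ l ∈ Finset.range k, a l ≤ 1 := by
  set s : ℕ → ℤ := fun k => ∑ l ∈ Finset.range k, a l with hsd
  have ss : ∀ k, s (k+1) = s k + a k := fun k => Finset.sum_range_succ _ _
  let G : ℤ → ℕ → Prop := fun v k => ∃ m < k, a m ≠ 0 ∧ (∀ l, m < l → l < k → a l = 0) ∧
    ((a m = v ∧ s k = v) ∨ (a m = -v ∧ s k = 0))
  have step : ∀ v k, G v k → G v (k+1) := by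
    rintro v k ⟨m, hm, hm0, hz, hv⟩
    by_cases hk0 : a k = 0
    · refine ⟨m, by omega, hm0, ?_, ?_⟩
      · intro l h1 h2
        by_cases hl : l = k
        · rw [hl, hk0]
        · exact hz l h1 (by omega)
      · rw [ss, hk0]; simpa using hv
    · have := halt m k hm hm0 hk0 hz
      refine ⟨k, by omega, hk0, ?_, ?_⟩
      · intro l h1 h2; omega
      · rw [ss]
        rcases hv with ⟨h1, h2⟩ | ⟨h1, h2⟩
        · right; constructor <;> omega
        · left; constructor <;> omega
  have main : ∀ k, ((∀ l < k, a l = 0) ∧ s k = 0) ∨ G 1 k ∨ G (-1) k := by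
    intro k
    induction k with
    | zero => left; simp [hsd]
    | succ k ih =>
      rcases ih with ⟨hz, hk⟩ | h | h
      · rcases h0 k with h | h | h
        · right; right
          exact ⟨k, by omega, by omega, by intros; omega, by left; rw [ss]; omega⟩
        · left
          refine ⟨?_, by rw [ss]; omega⟩
          intro l hl
          by_cases hl : l = k
          · rw [hl, h]
          · exact hz l (by omega)
        · right; left
          exact ⟨k, by omega, by omega, by intros; omega, by left; rw [ss]; omega⟩
      · exact Or.inr (Or.inl (step _ _ h))
      · exact Or.inr (Or.inr (step _ _ h))
  have bad : ∀ k ≤ n, ¬ G (-1) k := by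
    intro k hk hG
    have : ∀ m, k ≤ m → G (-1) m := fun m hm => Nat.le_induction hG (fun m _ h => step _ _ h) m hm
    obtain ⟨m, _, _, _, h⟩ := this n hk
    have : s n = 1 := hs
    omega
  change 0 ≤ s k ∧ s k ≤ 1
  rcases main k with h | h | h
  · omega
  · obtain ⟨m, _, _, _, h⟩ := h
    omega
  · exact absurd h (bad k hk)

lemma alt_backward (a : ℕ → ℤ) (n : ℕ)
    (H : ∀ k ≤ n, 0 ≤ ∑ l ∈ Finset.range k, a l ∧ ∑ l ∈ Finset.range k, a l ≤ 1) :
    (∀ j < n, a j = -1 ∨ a j = 0 ∨ a j = 1) ∧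
    (∀ j₁ j₂, j₁ < j₂ → j₂ < n → a j₁ ≠ 0 → a j₂ ≠ 0 →
      (∀ k, j₁ < k → k < j₂ → a k = 0) → a j₂ = - a j₁) := by
  set s : ℕ → ℤ := fun k => ∑ l ∈ Finset.range k, a l with hsd
  have ss : ∀ k, s (k+1) = s k + a k := fun k => Finset.sum_range_succ _ _
  replace H : ∀ k ≤ n, 0 ≤ s k ∧ s k ≤ 1 := H
  constructor
  · intro j hj
    have := H j (by omega)
    have := H (j+1) (by omega)
    have := ss j
    omega
  · intro j₁ j₂ h1 h2 n1 n2 hz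
    have key : ∀ m, j₁ + 1 ≤ m → m ≤ j₂ → s m = s (j₁ + 1) := by
      intro m hm
      induction m, hm using Nat.le_induction with
      | base => intro; rfl
      | succ m hm ih =>
        intro h
        rw [ss, ih (by omega), hz m (by omega) (by omega), add_zero]
    have := key j₂ (by omega) le_rfl
    have := ss j₁
    have := ss j₂
    have := H j₁ (by omega)
    have := H (j₁+1) (by omega)
    have := H (j₂) (by omega)
    have := H (j₂+1) (by omega)
    omega

lemma row_sum {n : ℕ} (A : Matrix (Fin n) (Fin n) ℤ) (i : Fin n) :
    ∑ l ∈ Finset.range n, extM A i l = ∑ j, A i j := by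
  rw [Finset.sum_range]; simp [extM_fin]

lemma col_sum {n : ℕ} (A : Matrix (Fin n) (Fin n) ℤ) (j : Fin n) :
    ∑ l ∈ Finset.range n, extM A l j = ∑ i, A i j := by
  rw [Finset.sum_range]; simp [extM_fin]

lemma lt_of_ext1 {n : ℕ} {A : Matrix (Fin n) (Fin n) ℤ} {i j : ℕ} (h : extM A i j ≠ 0) : i < n := by
  by_contra hc; exact h (extM_out1 A i j (by omega))
lemma lt_of_ext2 {n : ℕ} {A : Matrix (Fin n) (Fin n) ℤ} {i j : ℕ} (h : extM A i j ≠ 0) : j < n := by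
  by_contra hc; exact h (extM_out2 A i j (by omega))

lemma asm_csp {n : ℕ} {A : Matrix (Fin n) (Fin n) ℤ} (hA : IsASM A) : CSP n (cs A) := by
  obtain ⟨h0, hr, hc, har, hac⟩ := hA
  have e0 : ∀ i j, extM A i j = -1 ∨ extM A i j = 0 ∨ extM A i j = 1 := by
    intro i j
    unfold extM
    split
    · exact h0 _ _
    · simp
  have R : ∀ i < n, ∀ k ≤ n, 0 ≤ ∑ l ∈ Finset.range k, extM A i l ∧
      ∑ l ∈ Finset.range k, extM A i l ≤ 1 := by
    intro i hi k hk
    refine alt_forward (fun l => extM A i l) n (e0 i) ?_ ?_ k hk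
    · exact (row_sum A ⟨i, hi⟩).trans (hr _)
    · intro j₁ j₂ h1 n1 n2 hz
      have l1 := lt_of_ext2 n1
      have l2 := lt_of_ext2 n2
      have := har ⟨i, hi⟩ ⟨j₁, l1⟩ ⟨j₂, l2⟩ h1
      simp only [← extM_fin] at this
      exact this n1 n2 (fun k a b => hz k a b)
  have C : ∀ j < n, ∀ k ≤ n, 0 ≤ ∑ l ∈ Finset.range k, extM A l j ∧
      ∑ l ∈ Finset.range k, extM A l j ≤ 1 := by
    intro j hj k hk
    refine alt_forward (fun l => extM A l j) n (fun i => e0 i j) ?_ ?_ k hk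
    · exact (col_sum A ⟨j, hj⟩).trans (hc _)
    · intro j₁ j₂ h1 n1 n2 hz
      have l1 := lt_of_ext1 n1
      have l2 := lt_of_ext1 n2
      have := hac ⟨j, hj⟩ ⟨j₁, l1⟩ ⟨j₂, l2⟩ h1
      simp only [← extM_fin] at this
      exact this n1 n2 (fun k a b => hz k a b)
  refine ⟨fun j _ => cs_zero1 A j, fun i _ => cs_zero2 A i, ?_, ?_, ?_, ?_, ?_, ?_⟩
  · intro j
    induction j with
    | zero => intro; simp [cs_zero2]
    | succ j ih =>
      intro hj
      rw [cs_col, ih (by omega), col_sum A ⟨j, hj⟩, hc]; push_cast; rfl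
  · intro j
    induction j with
    | zero => intro; simp [cs_zero1]
    | succ j ih =>
      intro hj
      rw [cs_row, ih (by omega), row_sum A ⟨j, hj⟩, hr]; push_cast; rfl
  · intro i j hi hj
    rw [cs_row]; linarith [R i hi j hj]
  · intro i j hi hj
    rw [cs_row]; linarith [R i hi j hj]
  · intro i j hi hj
    rw [cs_col]; linarith [C j hj i hi]
  · intro i j hi hj
    rw [cs_col]; linarith [C j hj i hi]

lemma csp_asm {n : ℕ} {A : Matrix (Fin n) (Fin n) ℤ} (h : CSP n (cs A)) : IsASM A := by
  have R : ∀ i < n, ∀ k ≤ n, 0 ≤ ∑ l ∈ Finset.range k, extM A i l ∧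
      ∑ l ∈ Finset.range k, extM A i l ≤ 1 := by
    intro i hi k hk
    have := cs_row A i k
    have := h.r1 i k hi hk
    have := h.r2 i k hi hk
    constructor <;> linarith
  have C : ∀ j < n, ∀ k ≤ n, 0 ≤ ∑ l ∈ Finset.range k, extM A l j ∧
      ∑ l ∈ Finset.range k, extM A l j ≤ 1 := by
    intro j hj k hk
    have := cs_col A k j
    have := h.c1 k j hk hj
    have := h.c2 k j hk hj
    constructor <;> linarith
  refine ⟨?_, ?_, ?_, ?_, ?_⟩
  · intro i j
    rw [← extM_fin A i j]
    exact (alt_backward (fun l => extM A i l) n (R i i.2)).1 j j.2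
  · intro i
    rw [← row_sum]
    have := cs_row A i n
    rw [h.b2 _ i.2, h.b2 _ i.2.le] at this
    push_cast at this; linarith
  · intro i
    rw [← col_sum]
    have := cs_col A n i
    rw [h.b1 _ i.2, h.b1 _ i.2.le] at this
    push_cast at this; linarith
  · intro i j₁ j₂ h1 n1 n2 hz
    simp only [← extM_fin] at *
    refine (alt_backward (fun l => extM A i l) n (R i i.2)).2 j₁ j₂ h1 j₂.2 n1 n2 ?_
    intro k a b
    exact hz ⟨k, b.trans j₂.2⟩ a b
  · intro i j₁ j₂ h1 n1 n2 hz
    simp only [← extM_fin] at *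
    refine (alt_backward (fun l => extM A l i) n (C i i.2)).2 j₁ j₂ h1 j₂.2 n1 n2 ?_
    intro k a b
    exact hz ⟨k, b.trans j₂.2⟩ a b

lemma csp_small {n : ℕ} {g h : ℕ → ℕ → ℤ} (hh : CSP (n+1) h) (R : CRel n g h) : CSP n g := by
  refine ⟨?_, ?_, ?_, ?_, ?_, ?_, ?_, ?_⟩
  · intro j hj
    have := R 0 j (by omega) hj
    have := hh.z1 j (by omega)
    have := hh.z1 (j+1) (by omega)
    omega
  · intro i hi
    have := R i 0 hi (by omega)
    have := hh.z2 i (by omega)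
    have := hh.z2 (i+1) (by omega)
    omega
  · intro j hj
    have := R n j (by omega) hj
    have := hh.b1 j (by omega)
    have := hh.b1 (j+1) (by omega)
    push_cast at *
    omega
  · intro i hi
    have := R i n hi (by omega)
    have := hh.b2 i (by omega)
    have := hh.b2 (i+1) (by omega)
    push_cast at *
    omega
  · intro i j hi hj
    have := R i j (by omega) hj
    have := R (i+1) j (by omega) hj
    omega
  · intro i j hi hj
    have := R i j (by omega) hj
    have := R (i+1) j (by omega) hj
    omega
  · intro i j hi hj
    have := R i j (by omega) (by omega)
    have := R i (j+1) (by omega) hj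
    omega
  · intro i j hi hj
    have := R i j (by omega) (by omega)
    have := R i (j+1) (by omega) hj
    omega

lemma csp_big {n : ℕ} {g h : ℕ → ℕ → ℤ} (z1 : ∀ j ≤ n+1, h 0 j = 0)
    (z2 : ∀ i ≤ n+1, h i 0 = 0) (b1 : ∀ j ≤ n+1, h (n+1) j = j) (b2 : ∀ i ≤ n+1, h i (n+1) = i)
    (R : CRel n g h) : CSP (n+1) h := by
  refine ⟨z1, z2, by simpa using b1, by simpa using b2, ?_, ?_, ?_, ?_⟩
  · intro i j hi hj
    rcases Nat.lt_or_ge n j with h | h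
    · obtain rfl : j = n+1 := by omega
      rw [b2 _ hi.le, b2 _ hi]; push_cast; omega
    · have := R i j (by omega) h
      omega
  · intro i j hi hj
    rcases j with _ | j
    · rw [z2 _ hi, z2 _ hi.le]; norm_num
    · have := R i j (by omega) (by omega)
      omega
  · intro i j hi hj
    rcases Nat.lt_or_ge n i with h | h
    · obtain rfl : i = n+1 := by omega
      rw [b1 _ hj.le, b1 _ hj]; push_cast; omega
    · have := R i j h (by omega)
      omega
  · intro i j hi hj
    rcases i with _ | i
    · rw [z1 _ hj, z1 _ hj.le]; norm_num
    · have := R i j (by omega) (by omega)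
      omega

open Classical in
/-- The finset of ASMs. -/
noncomputable def asmSet (n : ℕ) : Finset (Matrix (Fin n) (Fin n) ℤ) :=
  ((Fintype.piFinset (fun _ : Fin n => Fintype.piFinset (fun _ : Fin n =>
    ({-1, 0, 1} : Finset ℤ)))).image (fun f => Matrix.of f)).filter (fun A => IsASM A)

open Classical in
lemma mem_asmSet {n : ℕ} {A : Matrix (Fin n) (Fin n) ℤ} : A ∈ asmSet n ↔ IsASM A := by
  unfold asmSet
  rw [Finset.mem_filter]
  refine ⟨fun h => h.2, fun h => ⟨?_, h⟩⟩
  rw [Finset.mem_image]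
  refine ⟨fun i j => A i j, ?_, rfl⟩
  rw [Fintype.mem_piFinset]; intro i
  rw [Fintype.mem_piFinset]; intro j
  simpa using h.1 i j

lemma asm_ext {n : ℕ} {A B : Matrix (Fin n) (Fin n) ℤ}
    (H : ∀ i j, i ≤ n → j ≤ n → cs A i j = cs B i j) : A = B := by
  rw [← diffM_cs A, ← diffM_cs B]; exact diffM_congr H

open Classical in
lemma count_small {n : ℕ} {B : Matrix (Fin (n+1)) (Fin (n+1)) ℤ} (hB : IsASM B) :
    ((asmSet n).filter (fun A => CRel n (cs A) (cs B))).card = 2 ^ Nminus B := by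
  have hh := asm_csp hB
  set h := cs B with hhd
  let F : Fin (n+1) × Fin (n+1) → Finset ℤ := fun p =>
    Finset.Icc (max (h p.1 p.2) (h (p.1+1) (p.2+1) - 1)) (min (h p.1 (p.2+1)) (h (p.1+1) p.2))
  have c1 : (Fintype.piFinset F).card = 2 ^ Nminus B := by
    have e0 : ∏ p : Fin _ × Fin _, (if B p.1 p.2 = -1 then 2 else 1) = 2 ^ Nminus B := by
      simp [Finset.prod_ite, Nminus]
    rw [Fintype.card_piFinset, ← e0]
    apply Finset.prod_congr rfl
    rintro ⟨i, j⟩ _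
    have e := cs_entry B i j
    rw [extM_fin, ← hhd] at e
    have a1 := hh.r1 i j i.2 j.2.le
    have a2 := hh.r2 i j i.2 j.2.le
    have a3 := hh.r1 i (j+1) i.2 j.2
    have a4 := hh.r2 i (j+1) i.2 j.2
    have a5 := hh.c1 i j i.2.le j.2
    have a6 := hh.c2 i j i.2.le j.2
    have a7 := hh.c1 (i+1) j i.2 j.2
    have a8 := hh.c2 (i+1) j i.2 j.2
    simp only [F, Int.card_Icc]
    split_ifs with hb <;> omega
  rw [← c1]
  refine Finset.card_bij (fun A _ p => cs A p.1 p.2) ?_ ?_ ?_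
  · intro A hA
    rw [Finset.mem_filter] at hA
    rw [Fintype.mem_piFinset]
    intro p
    have := hA.2 p.1 p.2 (by omega) (by omega)
    simp only [F, Finset.mem_Icc]
    omega
  · intro A hA A' hA' e
    apply asm_ext
    intro i j hi hj
    exact congrFun e (⟨i, by omega⟩, ⟨j, by omega⟩)
  · intro f hf
    rw [Fintype.mem_piFinset] at hf
    let g : ℕ → ℕ → ℤ := fun i j => if hij : i < n+1 ∧ j < n+1 then f (⟨i, hij.1⟩, ⟨j, hij.2⟩) else 0
    have gR : CRel n g h := by
      intro i j hi hj
      have := hf (⟨i, by omega⟩, ⟨j, by omega⟩)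
      simp only [F, Finset.mem_Icc] at this
      have e : g i j = f (⟨i, by omega⟩, ⟨j, by omega⟩) := dif_pos ⟨by omega, by omega⟩
      rw [e]
      omega
    have gC := csp_small hh gR
    have ge := cs_diffM g gC.z1 gC.z2
    have rel : CRel n (cs (diffM n g)) h := by
      intro i j hi hj
      rw [ge i j hi hj]; exact gR i j hi hj
    refine ⟨diffM n g, ?_, ?_⟩
    · rw [Finset.mem_filter, mem_asmSet]
      exact ⟨csp_asm (csp_small hh rel), rel⟩
    · funext p
      rw [ge _ _ (by omega) (by omega)]
      exact dif_pos ⟨p.1.2, p.2.2⟩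

open Classical in
lemma count_big {n : ℕ} {A : Matrix (Fin n) (Fin n) ℤ} (hA : IsASM A) :
    ((asmSet (n+1)).filter (fun B => CRel n (cs A) (cs B))).card = 2 ^ Nplus A := by
  have hg := asm_csp hA
  set g := cs A with hgd
  let F : Fin n × Fin n → Finset ℤ := fun p =>
    Finset.Icc (max (g (p.1+1) p.2) (g p.1 (p.2+1))) (min (g (p.1+1) (p.2+1)) (g p.1 p.2 + 1))
  have c1 : (Fintype.piFinset F).card = 2 ^ Nplus A := by
    have e0 : ∏ p : Fin _ × Fin _, (if A p.1 p.2 = 1 then 2 else 1) = 2 ^ Nplus A := by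
      simp [Finset.prod_ite, Nplus]
    rw [Fintype.card_piFinset, ← e0]
    apply Finset.prod_congr rfl
    rintro ⟨i, j⟩ _
    have e := cs_entry A i j
    rw [extM_fin, ← hgd] at e
    have a1 := hg.r1 i j i.2 j.2.le
    have a2 := hg.r2 i j i.2 j.2.le
    have a3 := hg.r1 i (j+1) i.2 j.2
    have a4 := hg.r2 i (j+1) i.2 j.2
    have a5 := hg.c1 i j i.2.le j.2
    have a6 := hg.c2 i j i.2.le j.2
    have a7 := hg.c1 (i+1) j i.2 j.2
    have a8 := hg.c2 (i+1) j i.2 j.2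
    simp only [F, Int.card_Icc]
    split_ifs with hb <;> omega
  rw [← c1]
  refine Finset.card_bij (fun B _ p => cs B (p.1+1) (p.2+1)) ?_ ?_ ?_
  · intro B hB
    rw [Finset.mem_filter] at hB
    rw [Fintype.mem_piFinset]
    rintro ⟨i, j⟩
    have := hB.2 i j (by omega) (by omega)
    have := hB.2 (i+1) j (by omega) (by omega)
    have := hB.2 i (j+1) (by omega) (by omega)
    have := hB.2 (i+1) (j+1) (by omega) (by omega)
    simp only [F, Finset.mem_Icc]
    omega
  · intro B hB B' hB' e
    rw [Finset.mem_filter, mem_asmSet] at hB hB'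
    have q := asm_csp hB.1
    have q' := asm_csp hB'.1
    apply asm_ext
    intro i j hi hj
    rcases i with _ | i
    · rw [cs_zero1, cs_zero1]
    rcases j with _ | j
    · rw [cs_zero2, cs_zero2]
    by_cases hi' : i = n
    · subst hi'
      rw [q.b1 _ hj, q'.b1 _ hj]
    by_cases hj' : j = n
    · subst hj'
      rw [q.b2 _ hi, q'.b2 _ hi]
    exact congrFun e (⟨i, by omega⟩, ⟨j, by omega⟩)
  · intro f hf
    rw [Fintype.mem_piFinset] at hf
    let h : ℕ → ℕ → ℤ := fun i j => if i = 0 ∨ j = 0 then 0 else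
      if i = n + 1 then j else if j = n + 1 then i else
      if hij : i - 1 < n ∧ j - 1 < n then f (⟨i - 1, hij.1⟩, ⟨j - 1, hij.2⟩) else 0
    have z1 : ∀ j, h 0 j = 0 := by intro j; simp [h]
    have z2 : ∀ i, h i 0 = 0 := by intro j; simp [h]
    have b1 : ∀ j, h (n+1) j = j := by
      intro j
      simp only [h]
      split_ifs <;> first | omega | simp_all
    have b2 : ∀ i ≤ n+1, h i (n+1) = i := by
      intro j
      simp only [h]
      split_ifs <;> first | omega | simp_all
    have hi : ∀ (i j : ℕ) (hi : i < n) (hj : j < n), h (i+1) (j+1) = f (⟨i, hi⟩, ⟨j, hj⟩) := by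
      intro i j hi hj
      simp only [h]
      rw [if_neg (by omega), if_neg (by omega), if_neg (by omega), dif_pos ⟨by omega, by omega⟩]
      rfl
    have bd : ∀ i j, i < n → j < n → g (i+1) j ≤ h (i+1) (j+1) ∧ g i (j+1) ≤ h (i+1) (j+1) ∧
        h (i+1) (j+1) ≤ g (i+1) (j+1) ∧ h (i+1) (j+1) ≤ g i j + 1 := by
      intro i j h1 h2
      rw [hi i j h1 h2]
      have := hf (⟨i, h1⟩, ⟨j, h2⟩)
      simp only [F, Finset.mem_Icc] at this
      omega
    have nn : ∀ i j, i ≤ n → j ≤ n → 0 ≤ g i j := by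
      intro i j hi hj
      induction i with
      | zero => rw [hg.z1 j hj]
      | succ i ih => exact (ih (by omega)).trans (hg.r1 i j (by omega) hj)
    have hR : CRel n g h := by
      intro i j hi' hj'
      refine ⟨?_, ?_, ?_, ?_⟩
      · rcases i with _ | i
        · rw [z1]; exact nn _ _ hi' hj'
        rcases j with _ | j
        · rw [z2]; exact nn _ _ hi' hj'
        exact (bd i j (by omega) (by omega)).2.2.1
      · by_cases hin : i = n
        · rw [hin, b1, hg.b1 j hj']; push_cast; omega
        by_cases hjn : j = n
        · rw [hjn, b2 _ (by omega), hg.b2 i hi']; push_cast; omega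
        exact (bd i j (by omega) (by omega)).2.2.2
      · rcases i with _ | i
        · rw [z1, hg.z1 j hj']
        by_cases hjn : j = n
        · rw [hjn, b2 _ (by omega), hg.b2 _ hi']
        exact (bd i j (by omega) (by omega)).1
      · rcases j with _ | j
        · rw [z2, hg.z2 i hi']
        by_cases hin : i = n
        · rw [hin, b1, hg.b1 _ hj']
        exact (bd i j (by omega) (by omega)).2.1
    have he := cs_diffM (n := n+1) h (fun j _ => z1 j) (fun i _ => z2 i)
    have hC := csp_big (fun j _ => z1 j) (fun i _ => z2 i) (fun j _ => b1 j) b2 hR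
    refine ⟨diffM (n+1) h, ?_, ?_⟩
    · rw [Finset.mem_filter, mem_asmSet]
      have rel : CRel n g (cs (diffM (n+1) h)) := by
        intro i j hi hj
        rw [he _ _ (by omega) (by omega), he _ _ (by omega) (by omega),
          he _ _ (by omega) (by omega), he _ _ (by omega) (by omega)]
        exact hR i j hi hj
      refine ⟨csp_asm (csp_big (fun j _ => cs_zero1 _ j) (fun j _ => cs_zero2 _ j) ?_ ?_ rel), rel⟩
      · intro j hj
        rw [he _ _ le_rfl hj, b1]
      · intro j hj
        rw [he _ _ hj le_rfl, b2 _ hj]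
    · funext p
      rw [he _ _ (by omega) (by omega)]
      exact hi _ _ p.1.2 p.2.2

lemma Nplus_eq {n : ℕ} {A : Matrix (Fin n) (Fin n) ℤ} (hA : IsASM A) :
    Nplus A = n + Nminus A := by
  have h1 : ∑ p : Fin n × Fin n, A p.1 p.2 = n := by
    rw [Fintype.sum_prod_type]
    simp [hA.2.1]
  have h2 : ∑ p : Fin n × Fin n, A p.1 p.2 = (Nplus A : ℤ) - Nminus A := by
    rw [Nplus, Nminus, Finset.card_filter, Finset.card_filter]
    push_cast
    rw [← Finset.sum_sub_distrib]
    apply Finset.sum_congr rfl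
    intro p _
    rcases hA.1 p.1 p.2 with h | h | h <;> rw [h] <;> norm_num
  omega

lemma asm_rec (n : ℕ) : ∑ B ∈ asmSet (n+1), 2 ^ Nminus B = 2 ^ n * ∑ A ∈ asmSet n, 2 ^ Nminus A := by
  classical
  have h := Finset.sum_card_bipartiteAbove_eq_sum_card_bipartiteBelow
    (s := asmSet n) (t := asmSet (n+1)) (fun A B => CRel n (cs A) (cs B))
  unfold Finset.bipartiteAbove Finset.bipartiteBelow at h
  rw [Finset.sum_congr rfl (fun A hA => count_big (mem_asmSet.1 hA)),
    Finset.sum_congr rfl (fun B hB => count_small (mem_asmSet.1 hB))] at h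
  rw [← h, Finset.mul_sum]
  apply Finset.sum_congr rfl
  intro A hA
  rw [Nplus_eq (mem_asmSet.1 hA), pow_add]

lemma asm_sum (n : ℕ) : ∑ A ∈ asmSet n, 2 ^ Nminus A = 2 ^ (n * (n - 1) / 2) := by
  induction n with
  | zero =>
    have : asmSet 0 = {0} := by
      ext A
      rw [mem_asmSet, Finset.mem_singleton]
      refine ⟨fun _ => Subsingleton.elim _ _, fun _ => ?_⟩
      refine ⟨?_, ?_, ?_, ?_, ?_⟩ <;> intro i <;> exact i.elim0
    rw [this]
    simp [Nminus]
  | succ n ih =>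
    rw [asm_rec, ih, ← pow_add]
    congr 1
    rw [← Finset.sum_range_id_mul_two, ← Finset.sum_range_id_mul_two, Finset.sum_range_succ]
    omega

open Classical in
/-- The sum over all `n×n` alternating sign matrices `A` of `2^{N₋(A)}` equals
`2^{n(n−1)/2}`. -/
theorem sum_two_pow_Nminus (n : ℕ) :
    ∑ᶠ A : Matrix (Fin n) (Fin n) ℤ, (if IsASM A then 2 ^ Nminus A else 0) =
      2 ^ (n * (n - 1) / 2) := by
  rw [← asm_sum, finsum_eq_sum_of_support_subset (s := asmSet n)]
  · apply Finset.sum_congr rfl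
    intro A hA
    rw [if_pos (mem_asmSet.1 hA)]
  · intro A hA
    rw [Finset.mem_coe, mem_asmSet]
    by_contra hc
    exact hA (if_neg hc)
end

section
/- The sum, over all complete monotone triangles of size n, of (1/2) to the power of the number of entries (above the top row) that also occur in the preceding row, equals 1. -/
/-- A triangular array with rows of lengths `1, 2, …, n` of natural numbers
(row `i`, `0`-indexed, has `i+1` entries). -/
abbrev Triangle (n : ℕ) := (i : Fin n) → Fin (i.1 + 1) → ℕ

/-- A monotone triangle: each row is strictly increasing from left to right, and
the entries weakly increase along both diagonal directions, i.e. each entry of a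
row lies weakly between its below-left and below-right neighbours in the next
row. -/
def IsMonotoneTriangle {n : ℕ} (t : Triangle n) : Prop :=
  (∀ i : Fin n, StrictMono (t i)) ∧
  (∀ (i i' : Fin n) (h : (i : ℕ) + 1 = (i' : ℕ)) (j : Fin (i.1 + 1)),
    t i' ⟨j.1, by omega⟩ ≤ t i j ∧ t i j ≤ t i' ⟨j.1 + 1, by omega⟩)

/-- A complete monotone triangle of size `n`: a monotone triangle whose bottom
row is `1, 2, …, n`. -/
def IsCompleteMT {n : ℕ} (t : Triangle n) : Prop :=
  IsMonotoneTriangle t ∧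
  ∀ (i : Fin n) (hi : (i : ℕ) = n - 1) (j : Fin n), t i ⟨j.1, by omega⟩ = (j : ℕ) + 1

/-- The entry of `t` in row `i` at position `k` does not occur in the preceding
row (entries of the top row are always new). -/
def IsNewEntry {n : ℕ} (t : Triangle n) (i : Fin n) (k : Fin (i.1 + 1)) : Prop :=
  ∀ (i' : Fin n), (i' : ℕ) + 1 = (i : ℕ) → ∀ k' : Fin (i'.1 + 1), t i' k' ≠ t i k

/-- The number of entries of `t` that do not occur in the preceding row. -/
noncomputable def newCount {n : ℕ} (t : Triangle n) : ℕ :=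
  Nat.card {p : (i : Fin n) × Fin (i.1 + 1) // IsNewEntry t p.1 p.2}

/-- The number of entries of `t` (necessarily above the top row) that do occur in
the preceding row. -/
noncomputable def oldCount {n : ℕ} (t : Triangle n) : ℕ :=
  Nat.card {p : (i : Fin n) × Fin (i.1 + 1) // ¬ IsNewEntry t p.1 p.2}

open Finset Polynomial in
/-- `(j+1)` times the polynomial antidifference for the trapezoidal sum. -/
noncomputable def trapPoly : ℕ → ℚ[X]
  | 0 => 1
  | j + 1 => Polynomial.bernoulli (j + 1) + Polynomial.C (((j : ℚ) + 1) / 2) * Polynomial.X ^ j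

lemma trapPoly_natDegree_le (j : ℕ) : (trapPoly j).natDegree ≤ j := by
  cases j with
  | zero => simp [trapPoly]
  | succ j =>
    rw [Polynomial.natDegree_le_iff_coeff_eq_zero]
    intro N hN
    simp only [trapPoly, Polynomial.coeff_add, Polynomial.coeff_bernoulli,
      Polynomial.coeff_C_mul, Polynomial.coeff_X_pow]
    rw [if_neg (by omega), if_neg (by omega)]
    simp

lemma trapPoly_coeff (j : ℕ) : (trapPoly j).coeff j = 1 := by
  cases j with
  | zero => simp [trapPoly]
  | succ j =>
    simp only [trapPoly, Polynomial.coeff_add, Polynomial.coeff_bernoulli,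
      Polynomial.coeff_C_mul, Polynomial.coeff_X_pow]
    simp

lemma trapPoly_monic (j : ℕ) : (trapPoly j).Monic :=
  Polynomial.monic_of_natDegree_le_of_coeff_eq_one j (trapPoly_natDegree_le j) (trapPoly_coeff j)

lemma trapPoly_natDegree (j : ℕ) : (trapPoly j).natDegree = j :=
  le_antisymm (trapPoly_natDegree_le j)
    (Polynomial.le_natDegree_of_ne_zero (by simp [trapPoly_coeff]))

/-- Trapezoidal weight. -/
def tw (a b x : ℕ) : ℚ := if x = a ∨ x = b then 1 / 2 else 1

lemma trap_sum (a b j : ℕ) (h : a < b) :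
    ((j : ℚ) + 1) * ∑ x ∈ Finset.Icc a b, tw a b x * (x : ℚ) ^ j
      = (trapPoly (j + 1)).eval (b : ℚ) - (trapPoly (j + 1)).eval (a : ℚ) := by
  have h1 : ∀ x : ℕ, tw a b x * (x : ℚ) ^ j = (x : ℚ) ^ j - (if x = a then (a : ℚ) ^ j / 2 else 0)
      - (if x = b then (b : ℚ) ^ j / 2 else 0) := by
    intro x
    unfold tw
    by_cases ha : x = a
    · subst ha
      simp [h.ne]; ring
    · by_cases hb : x = b
      · subst hb; simp [ha]; ring
      · simp [ha, hb]
  simp_rw [h1]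
  rw [Finset.sum_sub_distrib, Finset.sum_sub_distrib, Finset.sum_ite_eq', Finset.sum_ite_eq',
    if_pos (by simp [h.le]), if_pos (by simp [h.le]),
    ← Finset.Ico_insert_right h.le, Finset.sum_insert (by simp), Finset.sum_Ico_eq_sub _ h.le]
  simp only [trapPoly, Polynomial.eval_add, Polynomial.eval_mul, Polynomial.eval_C,
    Polynomial.eval_pow, Polynomial.eval_X]
  have e1 := Polynomial.bernoulli_succ_eval a j
  have e2 := Polynomial.bernoulli_succ_eval b j
  simp only [Nat.succ_eq_add_one] at e1 e2
  rw [e1, e2]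
  ring

/-- Rational Vandermonde determinant of a vector of naturals. -/
noncomputable def vd {m : ℕ} (k : Fin m → ℕ) : ℚ :=
  (Matrix.vandermonde (fun i => (k i : ℚ))).det

lemma vd_diff {m : ℕ} (k : Fin (m + 1) → ℕ) :
    vd k = (Matrix.of fun i j : Fin m => (trapPoly (j + 1)).eval (k i.succ : ℚ)
      - (trapPoly (j + 1)).eval (k i.castSucc : ℚ)).det := by
  unfold vd
  rw [Matrix.det_eval_matrixOfPolynomials_eq_det_vandermonde _ (fun j => trapPoly j)
    (fun i => trapPoly_natDegree i) (fun i => trapPoly_monic i)]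
  rw [Matrix.det_eq_of_forall_row_eq_smul_add_pred
    (B := Matrix.of fun i j => Fin.cases ((trapPoly j).eval (k 0 : ℚ))
      (fun i => (trapPoly j).eval (k i.succ : ℚ) - (trapPoly j).eval (k i.castSucc : ℚ)) i)
    (fun _ => 1) (by intro j; simp) (by intro i j; simp)]
  rw [Matrix.det_succ_column_zero, Fin.sum_univ_succ]
  simp [trapPoly, Matrix.submatrix]

lemma vd_step_full {m : ℕ} (k : Fin (m + 2) → ℕ) (hk : StrictMono k) :
    ∑ l ∈ Fintype.piFinset (fun i : Fin (m + 1) => Finset.Icc (k i.castSucc) (k i.succ)),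
      (∏ i, tw (k i.castSucc) (k i.succ) (l i)) * vd l = vd k / (m + 1).factorial := by
  have hf : (∏ i : Fin (m + 1), ((i : ℚ) + 1)) = (m + 1).factorial := by
    rw [← Finset.prod_range_add_one_eq_factorial, Finset.prod_range]
    push_cast; rfl
  have hne : ((m + 1).factorial : ℚ) ≠ 0 := by positivity
  rw [eq_div_iff hne, vd_diff k, ← hf, mul_comm]
  have e : (Matrix.of fun i j : Fin (m + 1) => (trapPoly (j + 1)).eval (k i.succ : ℚ)
      - (trapPoly (j + 1)).eval (k i.castSucc : ℚ)) = Matrix.of fun i j : Fin (m + 1) =>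
        ((j : ℚ) + 1) * (Matrix.of fun i j : Fin (m + 1) =>
          ∑ x ∈ Finset.Icc (k i.castSucc) (k i.succ),
          tw (k i.castSucc) (k i.succ) x * (x : ℚ) ^ (j : ℕ)) i j := by
    ext i j
    simp only [Matrix.of_apply]
    rw [trap_sum _ _ _ (hk Fin.castSucc_lt_succ)]
  rw [e, Matrix.det_mul_row]
  congr 1
  have := (Matrix.detRowAlternating (R := ℚ) (n := Fin (m + 1))).toMultilinearMap.map_sum_finset
    (fun i x => (fun j => tw (k i.castSucc) (k i.succ) x * (x : ℚ) ^ (j : ℕ) : Fin (m + 1) → ℚ))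
    (fun i => Finset.Icc (k i.castSucc) (k i.succ))
  have e2 : (Matrix.of fun i j : Fin (m + 1) => ∑ x ∈ Finset.Icc (k i.castSucc) (k i.succ),
          tw (k i.castSucc) (k i.succ) x * (x : ℚ) ^ (j : ℕ)) =
      fun i => ∑ x ∈ Finset.Icc (k i.castSucc) (k i.succ),
        (fun j => tw (k i.castSucc) (k i.succ) x * (x : ℚ) ^ (j : ℕ) : Fin (m + 1) → ℚ) := by
    ext i j
    simp [Finset.sum_apply]
  rw [e2]
  refine Eq.trans ?_ this.symm
  refine Finset.sum_congr rfl fun l _ => ?_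
  rw [vd, ← Matrix.det_mul_column]
  rfl

open Classical in
/-- strictly increasing rows interlacing with `k` -/
noncomputable def interl {m : ℕ} (k : Fin (m + 2) → ℕ) : Finset (Fin (m + 1) → ℕ) :=
  (Fintype.piFinset (fun i : Fin (m + 1) => Finset.Icc (k i.castSucc) (k i.succ))).filter StrictMono

open Classical in
/-- number of entries of `k` occurring in `l` -/
noncomputable def occ {m m' : ℕ} (l : Fin m → ℕ) (k : Fin m' → ℕ) : ℕ :=
  (Finset.univ.filter fun p => ∃ q, l q = k p).card

lemma occ_weight {m : ℕ} (k : Fin (m + 2) → ℕ) (hk : StrictMono k) (l : Fin (m + 1) → ℕ)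
    (hl : l ∈ interl k) :
    ((1 : ℚ) / 2) ^ occ l k = ∏ i, tw (k i.castSucc) (k i.succ) (l i) := by
  classical
  simp only [interl, Finset.mem_filter, Fintype.mem_piFinset, Finset.mem_Icc] at hl
  obtain ⟨hb, hs⟩ := hl
  unfold tw
  rw [Finset.prod_ite]
  simp only [Finset.prod_const, one_pow, mul_one]
  congr 1
  unfold occ
  rw [← Finset.card_image_of_injective _ hk.injective,
    ← Finset.card_image_of_injective (Finset.univ.filter _) hs.injective]
  congr 1
  ext x
  simp only [Finset.mem_image, Finset.mem_filter, Finset.mem_univ, true_and]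
  constructor
  · rintro ⟨p, ⟨q, hq⟩, rfl⟩
    refine ⟨q, ?_, hq⟩
    have := hb q
    rw [hq] at this
    have h1 := hk.le_iff_le.1 this.1
    have h2 := hk.le_iff_le.1 this.2
    rw [hq, hk.injective.eq_iff, hk.injective.eq_iff]
    simp only [Fin.ext_iff, Fin.le_def, Fin.val_castSucc, Fin.val_succ] at *
    omega
  · rintro ⟨q, h | h, rfl⟩
    · exact ⟨_, ⟨q, h⟩, h.symm⟩
    · exact ⟨_, ⟨q, h⟩, h.symm⟩

lemma vd_step {m : ℕ} (k : Fin (m + 2) → ℕ) (hk : StrictMono k) :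
    ∑ l ∈ interl k, ((1 : ℚ) / 2) ^ occ l k * vd l = vd k / (m + 1).factorial := by
  classical
  rw [← vd_step_full k hk, Finset.sum_congr rfl fun l hl => by rw [occ_weight k hk l hl]]
  unfold interl
  apply Finset.sum_filter_of_ne
  intro l hl hne
  simp only [Fintype.mem_piFinset, Finset.mem_Icc] at hl
  have hinj : Function.Injective (fun i => (l i : ℚ)) :=
    Matrix.det_vandermonde_ne_zero_iff.1 (right_ne_zero_of_mul hne)
  have hmono : Monotone l := by
    apply Fin.monotone_iff_le_succ.2
    intro i
    have h1 := (hl i.castSucc).2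
    have h2 := (hl i.succ).1
    rw [Fin.succ_castSucc] at h1
    exact h1.trans h2
  exact hmono.strictMono_of_injective fun a b hab => hinj (by simp [hab])

/-- Append a bottom row. -/
def extT {m : ℕ} (t : Triangle m) (k : Fin (m + 1) → ℕ) : Triangle (m + 1) :=
  fun i => if h : i.1 < m then t ⟨i.1, h⟩ else fun j => k ⟨j.1, by omega⟩

/-- Remove the bottom row. -/
def initT {m : ℕ} (t : Triangle (m + 1)) : Triangle m := fun i => t i.castSucc

/-- Bottom row. -/
def lastT {m : ℕ} (t : Triangle (m + 1)) : Fin (m + 1) → ℕ := t (Fin.last m)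

lemma initT_extT {m : ℕ} (t : Triangle m) (k : Fin (m + 1) → ℕ) : initT (extT t k) = t := by
  funext i; simp [initT, extT]

lemma lastT_extT {m : ℕ} (t : Triangle m) (k : Fin (m + 1) → ℕ) : lastT (extT t k) = k := by
  funext i; simp [lastT, extT]

lemma extT_self {m : ℕ} (t : Triangle (m + 1)) : extT (initT t) (lastT t) = t := by
  funext i
  induction i using Fin.lastCases with
  | last => funext j; simp [lastT, extT]
  | cast i => funext j; simp [initT, extT]

lemma mt_iff {m : ℕ} (t : Triangle (m + 2)) :
    IsMonotoneTriangle t ↔ IsMonotoneTriangle (initT t) ∧ StrictMono (lastT t) ∧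
      lastT (initT t) ∈ interl (lastT t) := by
  classical
  simp only [interl, Finset.mem_filter, Fintype.mem_piFinset, Finset.mem_Icc]
  constructor
  · rintro ⟨h1, h2⟩
    refine ⟨⟨fun i => h1 _, fun i i' h j => h2 i.castSucc i'.castSucc (by simpa using h) j⟩,
      h1 _, fun j => ?_, h1 _⟩
    exact h2 (Fin.last m).castSucc (Fin.last (m + 1)) (by simp) j
  · rintro ⟨⟨h1, h2⟩, h3, h4, h5⟩
    refine ⟨fun i => ?_, fun i i' h j => ?_⟩
    · induction i using Fin.lastCases with
      | last => exact h3
      | cast i => exact h1 i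
    · induction i' using Fin.lastCases with
      | last =>
        have : i = (Fin.last m).castSucc := by
          ext; simp at h ⊢; omega
        subst this
        exact h4 j
      | cast i' =>
        have hi : i.1 < m + 1 := by have := i'.2; simp at h; omega
        exact h2 ⟨i.1, hi⟩ i' (by simpa using h) j

open Classical in
lemma oldCount_eq {n : ℕ} (t : Triangle n) :
    oldCount t = ∑ i, (Finset.univ.filter fun j => ¬ IsNewEntry t i j).card := by
  unfold oldCount
  rw [Nat.card_eq_fintype_card, Fintype.card_subtype, Finset.card_filter, Fintype.sum_sigma]
  simp only [Finset.card_filter]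

lemma oldCount_succ {m : ℕ} (t : Triangle (m + 2)) :
    oldCount t = oldCount (initT t) + occ (lastT (initT t)) (lastT t) := by
  classical
  rw [oldCount_eq, oldCount_eq, Fin.sum_univ_castSucc]
  congr 1
  · refine Finset.sum_congr rfl fun i _ => ?_
    congr 1
    refine Finset.filter_congr fun j _ => not_congr ?_
    constructor
    · intro h i' hi k'
      exact h i'.castSucc (by simpa using hi) k'
    · intro h i' hi k'
      have hi' : i'.1 < m + 1 := by have := i.2; simp at hi; omega
      exact h ⟨i'.1, hi'⟩ (by simpa using hi) k'
  · unfold occ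
    congr 1
    refine Finset.filter_congr fun j _ => ?_
    unfold IsNewEntry
    push Not
    constructor
    · rintro ⟨i', hi, k', hk⟩
      have : i' = (Fin.last m).castSucc := by
        ext; simp at hi ⊢; omega
      subst this
      exact ⟨k', hk⟩
    · rintro ⟨q, hq⟩
      exact ⟨(Fin.last m).castSucc, by simp, q, hq⟩

lemma main_count (m : ℕ) (k : Fin (m + 1) → ℕ) (hk : StrictMono k) :
    ∃ S : Finset (Triangle (m + 1)), (∀ t, t ∈ S ↔ IsMonotoneTriangle t ∧ lastT t = k) ∧
      ∑ t ∈ S, ((1 : ℚ) / 2) ^ oldCount t = vd k / m.superFactorial := by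
  classical
  induction m with
  | zero =>
    refine ⟨{extT (fun i => i.elim0) k}, fun t => ?_, ?_⟩
    · rw [Finset.mem_singleton]
      constructor
      · rintro rfl
        refine ⟨⟨fun i => ?_, fun i i' h => ?_⟩, lastT_extT _ _⟩
        · have : i = 0 := by ext; simp
          subst this
          exact hk
        · omega
      · rintro ⟨-, rfl⟩
        conv_lhs => rw [← extT_self t]
        congr 1
        exact funext fun i => i.elim0
    · have : oldCount (extT (fun i => i.elim0 : Triangle 0) k) = 0 := by
        rw [oldCount_eq]
        simp only [Finset.sum_eq_zero_iff, Finset.card_eq_zero, Finset.filter_eq_empty_iff,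
          not_not]
        intro i _ j _ i' hi
        omega
      simp [this, vd]
  | succ m ih =>
    choose! S hS hsum using ih
    have hi : ∀ l ∈ interl k, StrictMono l := fun l hl => (Finset.mem_filter.1 hl).2
    refine ⟨(interl k).biUnion fun l => (S l).image fun t => extT t k, fun t => ?_, ?_⟩
    · simp only [Finset.mem_biUnion, Finset.mem_image]
      constructor
      · rintro ⟨l, hl, t, ht, rfl⟩
        rw [hS l (hi l hl)] at ht
        rw [mt_iff, initT_extT, lastT_extT, ht.2]
        exact ⟨⟨ht.1, hk, hl⟩, rfl⟩
      · rintro ⟨ht, rfl⟩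
        rw [mt_iff] at ht
        exact ⟨_, ht.2.2, initT t, (hS _ (hi _ ht.2.2) _).2 ⟨ht.1, rfl⟩, extT_self t⟩
    · rw [Finset.sum_biUnion]
      · have : ∀ l ∈ interl k, ∑ t ∈ (S l).image (fun t => extT t k), ((1 : ℚ) / 2) ^ oldCount t
            = (1 / 2) ^ occ l k * vd l / m.superFactorial := by
          intro l hl
          rw [Finset.sum_image, mul_div_assoc, ← hsum l (hi l hl), Finset.mul_sum]
          · refine Finset.sum_congr rfl fun t ht => ?_
            rw [oldCount_succ, initT_extT, lastT_extT, ((hS l (hi l hl) t).1 ht).2, pow_add,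
              mul_comm]
          · intro a _ b _ hab
            have := congrArg initT hab
            simpa only [initT_extT] using this
        rw [Finset.sum_congr rfl this, ← Finset.sum_div, vd_step k hk, div_div,
          Nat.superFactorial_succ]
        push_cast
        rfl
      · intro l hl l' hl' hne
        rw [Function.onFun, Finset.disjoint_left]
        intro t h1 h2
        simp only [Finset.mem_image] at h1 h2
        obtain ⟨a, ha, rfl⟩ := h1
        obtain ⟨b, hb, hab⟩ := h2
        have := congrArg initT hab
        simp only [initT_extT] at this
        subst this
        exact hne (((hS l (hi l hl) _).1 ha).2.symm.trans ((hS l' (hi l' hl') _).1 hb).2)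

open Classical in
/-- The sum, over all complete monotone triangles of size `n`, of `(1/2)` to the
power of the number of entries (above the top row) that also occur in the
preceding row, equals `1`. -/
theorem sum_weights_complete_monotone_triangles (n : ℕ) :
    ∑ᶠ t : Triangle n, (if IsCompleteMT t then ((1 : ℚ) / 2) ^ oldCount t else 0) = 1 := by
  cases n with
  | zero =>
    have h0 : ∀ t : Triangle 0, IsCompleteMT t := fun t =>
      ⟨⟨fun i => i.elim0, fun i => i.elim0⟩, fun i => i.elim0⟩
    have h1 : ∀ t : Triangle 0, oldCount t = 0 := fun t => by rw [oldCount_eq]; simp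
    simp only [h0, h1]
    simp [finsum_eq_sum_of_fintype]
  | succ m =>
    have hk : StrictMono (fun j : Fin (m + 1) => (j : ℕ) + 1) := fun a b h => by
      simpa using h
    obtain ⟨S, hS, hsum⟩ := main_count m _ hk
    have hc : ∀ t : Triangle (m + 1), IsCompleteMT t ↔ t ∈ S := by
      intro t
      rw [hS]
      refine and_congr_right fun _ => ?_
      constructor
      · intro h
        exact funext fun j => h (Fin.last m) (by simp) j
      · intro h i hi j
        have : i = Fin.last m := by ext; simpa using hi
        subst this
        exact congrFun h j
    have hv : vd (fun j : Fin (m + 1) => (j : ℕ) + 1) = m.superFactorial := by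
      have h := Matrix.det_vandermonde_add (fun i : Fin (m + 1) => ((i : ℕ) : ℚ)) 1
      rw [Matrix.det_vandermonde_id_eq_superFactorial] at h
      rw [← h, vd]
      push_cast
      rfl
    have hne : (m.superFactorial : ℚ) ≠ 0 := by
      rw [← hv]
      refine Matrix.det_vandermonde_ne_zero_iff.2 fun a b hab => ?_
      simpa [Fin.ext_iff] using hab
    rw [finsum_eq_sum_of_support_subset (s := S) (fun t : Triangle (m + 1) =>
      (if IsCompleteMT t then ((1 : ℚ) / 2) ^ oldCount t else 0))]
    · rw [hv, div_self hne] at hsum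
      refine Eq.trans (Finset.sum_congr rfl fun t ht => ?_) hsum
      rw [if_pos ((hc t).2 ht)]
    · intro t ht
      by_contra h
      rw [Finset.mem_coe, ← hc] at h
      simp [h] at ht
end
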